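/- arXiv:1605.04203 — 2 statements merged into one kernel-verified Lean document; each statement's English description precedes it below -/
import Mathlib

section
/- Let R = ℂ[x_0,…,x_n], let J ⊆ R be a homogeneous ideal, and let l ∈ R be homogeneous of degree 1 and not a zero-divisor on R/J. If P is a minimal prime over J such that the length of the R_P-module (R/J)_P equals m, then Q = P + ⟨l − 1⟩ is a minimal prime over J + ⟨l − 1⟩, and the length of the R_Q-module (R/(J + ⟨l − 1⟩))_Q also equals m. -/
open MvPolynomial
open scoped Classical

noncomputable section

/-- The length of a module: the Krull dimension of its lattice of submodules,
i.e. the supremum of the lengths of strictly increasing chains of submodules. -/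
def moduleLength (R M : Type*) [Ring R] [AddCommGroup M] [Module R M] : WithBot ℕ∞ :=
  Order.krullDim (Submodule R M)

/-- The multiplicity of an ideal `A` at a prime `P`: the length of the localization
`(R ⧸ A)_P` as a module over the localization `R_P` (junk value `0` if `P` is not prime). -/
def localMult {R : Type*} [CommRing R] (A P : Ideal R) : WithBot ℕ∞ :=
  if h : P.IsPrime then
    letI := h
    moduleLength (Localization P.primeCompl) (LocalizedModule P.primeCompl (R ⧸ A))
  else 0

theorem lm_eq {R : Type*} [CommRing R] (A P : Ideal R) [hP : P.IsPrime] :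
    localMult A P = ((Module.length (Localization P.primeCompl)
      (Localization P.primeCompl ⧸ A.map (algebraMap R (Localization P.primeCompl))) : ℕ∞) :
        WithBot ℕ∞) := by
  unfold localMult
  rw [dif_pos hP]
  unfold moduleLength
  rw [← Module.coe_length]
  congr 1
  exact ((LocalizedModule.equivTensorProduct P.primeCompl (R ⧸ A)).trans
    (Algebra.TensorProduct.quotIdealMapEquivTensorQuot
      (Localization P.primeCompl) A).symm.toLinearEquiv).length_eq

theorem length_comap {B B' : Type*} [CommRing B] [CommRing B'] (f : B →+* B')
    (hf : Function.Surjective f) (I : Ideal B') :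
    Module.length B (B ⧸ I.comap f) = Module.length B' (B' ⧸ I) := by
  algebraize [f]
  rw [← Module.length_eq_of_surjective (S := B) (R := B') (M := B' ⧸ I) hf]
  refine LinearEquiv.length_eq (LinearEquiv.ofBijective
    (Submodule.mapQ (I.comap f) (I.restrictScalars B) (Algebra.linearMap B B') (fun x hx => hx))
    ⟨?_, ?_⟩)
  · rw [injective_iff_map_eq_zero]
    intro y hy
    obtain ⟨y, rfl⟩ := Submodule.Quotient.mk_surjective _ y
    have h2 : (Submodule.Quotient.mk (f y) : B' ⧸ I.restrictScalars B) = 0 := hy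
    rw [Submodule.Quotient.mk_eq_zero] at h2 ⊢
    exact h2
  · intro y
    obtain ⟨y, rfl⟩ := Submodule.Quotient.mk_surjective _ y
    obtain ⟨x, rfl⟩ := hf y
    exact ⟨Submodule.Quotient.mk x, rfl⟩

theorem lm_comap {R T : Type*} [CommRing R] [CommRing T] (f : R →+* T) (P : Ideal T)
    [hP : P.IsPrime] (J : Ideal R) (I : Ideal T) (hJI : ∀ x ∈ J, f x ∈ I)
    (hIJ : ∀ x, f x ∈ I → ∃ s, f s ∉ P ∧ s * x ∈ J)
    (hs : ∀ t : T, ∃ s r, f s ∉ P ∧ f s * t = f r) :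
    localMult J (P.comap f) = localMult I P := by
  rw [lm_eq, lm_eq]
  congr 1
  set g := Localization.localRingHom (P.comap f) P f rfl with hg
  have hgs : Function.Surjective g := by
    intro y
    obtain ⟨t, u, rfl⟩ := IsLocalization.exists_mk'_eq P.primeCompl y
    obtain ⟨s, r, h1, h2⟩ := hs t
    obtain ⟨s', r', h1', h2'⟩ := hs u
    have hr' : f r' ∉ P := by
      rw [← h2']
      exact fun h => (hP.mem_or_mem h).elim h1' u.2
    refine ⟨IsLocalization.mk' (M := (P.comap f).primeCompl) _ (r * s') ⟨s * r', ?_⟩, ?_⟩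
    · intro h
      have h : f (s * r') ∈ P := h
      rw [map_mul] at h
      exact (hP.mem_or_mem h).elim h1 hr'
    · rw [hg, Localization.localRingHom_mk', IsLocalization.mk'_eq_iff_eq]
      congr 1
      simp only [map_mul, ← h2, ← h2']
      ring
  rw [← length_comap g hgs]
  have : (J.map (algebraMap R (Localization (P.comap f).primeCompl))) =
      (I.map (algebraMap T (Localization P.primeCompl))).comap g := by
    apply le_antisymm
    · rw [Ideal.map_le_iff_le_comap]
      intro x hx
      rw [Ideal.mem_comap, Ideal.mem_comap, hg, Localization.localRingHom_to_map]
      exact Ideal.mem_map_of_mem _ (hJI x hx)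
    · intro y hy
      obtain ⟨t, u, rfl⟩ := IsLocalization.exists_mk'_eq (P.comap f).primeCompl y
      rw [Ideal.mem_comap, hg, Localization.localRingHom_mk',
        IsLocalization.mk'_mem_map_algebraMap_iff] at hy
      rw [IsLocalization.mk'_mem_map_algebraMap_iff]
      obtain ⟨m, hm, hmt⟩ := hy
      obtain ⟨s, r, h1, h2⟩ := hs m
      obtain ⟨s', h3, h4⟩ := hIJ (r * t) (by
        rw [map_mul, ← h2, mul_assoc]; exact I.mul_mem_left _ hmt)
      refine ⟨s' * r, ?_, by rwa [mul_assoc]⟩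
      intro h
      have h : f (s' * r) ∈ P := h
      rw [map_mul, ← h2] at h
      exact (hP.mem_or_mem h).elim h3 fun h => (hP.mem_or_mem h).elim h1 hm
  rw [this]

theorem length_flat {A B : Type*} [CommRing A] [CommRing B] [IsLocalRing A] [IsLocalRing B]
    (g : A →+* B) (hflat : g.Flat) (hloc : IsLocalHom g)
    (hmax : (IsLocalRing.maximalIdeal A).map g = IsLocalRing.maximalIdeal B) (I : Ideal A) :
    Module.length B (B ⧸ I.map g) = Module.length A (A ⧸ I) := by
  algebraize [g]
  have key := IsLocalRing.length_baseChange A B (A ⧸ I)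
  rw [← (Algebra.TensorProduct.quotIdealMapEquivTensorQuot B I).toLinearEquiv.length_eq] at key
  have h1 : IsSimpleModule B (B ⧸ IsLocalRing.maximalIdeal B) := by
    rw [isSimpleModule_iff_isCoatom]
    exact (IsLocalRing.maximalIdeal.isMaximal _).out
  have e : algebraMap A B = g := rfl
  rw [e, hmax, Module.length_eq_one B (B ⧸ IsLocalRing.maximalIdeal B), mul_one] at key
  exact key

theorem lm_poly {S : Type*} [CommRing S] (Q J : Ideal S) [hQ : Q.IsPrime] :
    localMult (J.map (Polynomial.C : S →+* Polynomial S)) (Q.map Polynomial.C) =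
      localMult J Q := by
  have hc : Q = (Q.map (Polynomial.C : S →+* Polynomial S)).comap Polynomial.C := by
    ext x
    rw [Ideal.mem_comap, Ideal.mem_map_C_iff]
    refine ⟨fun h n => ?_, fun h => by simpa using h 0⟩
    rw [Polynomial.coeff_C]
    split_ifs <;> simp [h]
  rw [lm_eq, lm_eq]
  congr 1
  set g := Localization.localRingHom Q (Q.map (Polynomial.C : S →+* Polynomial S))
    Polynomial.C hc with hg
  have hflat : g.Flat := RingHom.Flat.localRingHom (by
    have : Module.Flat S (Polynomial S) := inferInstance
    rwa [← Polynomial.algebraMap_eq, RingHom.flat_algebraMap_iff]) _ _ _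
  have hcomp : g.comp (algebraMap S (Localization Q.primeCompl)) =
      (algebraMap (Polynomial S) (Localization (Q.map (Polynomial.C : S →+* Polynomial S)).primeCompl)).comp
        Polynomial.C := by
    ext x
    simp [hg, Localization.localRingHom_to_map]
  have hloc : IsLocalHom g := Localization.isLocalHom_localRingHom _ _ _ _
  have hmax : (IsLocalRing.maximalIdeal (Localization.AtPrime Q)).map g =
      IsLocalRing.maximalIdeal
        (Localization.AtPrime (Q.map (Polynomial.C : S →+* Polynomial S))) := by
    rw [← Localization.AtPrime.map_eq_maximalIdeal, ← Localization.AtPrime.map_eq_maximalIdeal,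
      Ideal.map_map, hcomp, Ideal.map_map]
  rw [← length_flat g hflat hloc hmax, Ideal.map_map, Ideal.map_map, hcomp]

theorem aeval_scale {σ K A : Type*} [CommRing K] [CommRing A] [Algebra K A] (a : σ → A) (c : A)
    {d : ℕ} {f : MvPolynomial σ K} (hf : f.IsHomogeneous d) :
    aeval (fun i => c * a i) f = c ^ d * aeval a f := by
  rw [aeval_def, aeval_def, eval₂_eq, eval₂_eq, Finset.mul_sum]
  refine Finset.sum_congr rfl fun m hm => ?_
  have hd : ∑ i ∈ m.support, m i = d := by
    have := hf (mem_support_iff.mp hm)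
    rw [← this, Finsupp.weight_apply, Finsupp.sum]
    simp
  simp only [mul_pow, Finset.prod_mul_distrib]
  rw [Finset.prod_pow_eq_pow_sum, hd]
  ring

/-- The homogenizing map `R → S[X]`, sending `x_i` to `x_i X`. -/
def th {σ K S : Type*} [CommRing K] [CommRing S] [Algebra K S] (q : MvPolynomial σ K →ₐ[K] S) :
    MvPolynomial σ K →ₐ[K] Polynomial S :=
  aeval fun i => Polynomial.X * Polynomial.C (q (X i))

section
variable {σ K S : Type*} [CommRing K] [CommRing S] [Algebra K S] (q : MvPolynomial σ K →ₐ[K] S)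
  (l : MvPolynomial σ K)

theorem th_hom {d : ℕ} {f : MvPolynomial σ K} (hf : f.IsHomogeneous d) :
    th q f = Polynomial.X ^ d * Polynomial.C (q f) := by
  rw [th, aeval_scale _ _ hf]
  congr 1
  have : aeval (fun i => Polynomial.C (q (X i))) =
      (Polynomial.CAlgHom (R := K)).comp (q) := by
    ext i : 1
    simp [Polynomial.CAlgHom]
  rw [this]
  rfl

theorem th_l (h1 : q l = 1) (hl : l.IsHomogeneous 1) : th q l = Polynomial.X := by
  rw [th_hom q hl, h1]
  simp

theorem coeff_th (f : MvPolynomial σ K) (d : ℕ) :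
    (th q f).coeff d = q (homogeneousComponent d f) := by
  conv_lhs => rw [← sum_homogeneousComponent f]
  rw [map_sum, Polynomial.finsetSum_coeff]
  have : ∀ i ∈ Finset.range (f.totalDegree + 1),
      (th q (homogeneousComponent i f)).coeff d =
        if d = i then q (homogeneousComponent i f) else 0 := by
    intro i _
    rw [th_hom q (homogeneousComponent_isHomogeneous i f), mul_comm,
      Polynomial.coeff_C_mul_X_pow]
  rw [Finset.sum_congr rfl this, Finset.sum_ite_eq]
  split_ifs with h
  · rfl
  · rw [homogeneousComponent_eq_zero, map_zero]
    rw [Finset.mem_range] at h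
    omega

theorem eval_th (f : MvPolynomial σ K) :
    (th q f).eval 1 = q f := by
  conv_lhs => rw [← sum_homogeneousComponent f]
  conv_rhs => rw [← sum_homogeneousComponent f]
  rw [map_sum, map_sum, Polynomial.eval_finsetSum]
  refine Finset.sum_congr rfl fun i _ => ?_
  rw [th_hom q (homogeneousComponent_isHomogeneous i f)]
  simp

theorem th_surj (h1 : q l = 1) (hq : Function.Surjective q) (hl : l.IsHomogeneous 1)
    (t : Polynomial S) :
    ∃ (N : ℕ) (r : MvPolynomial σ K), Polynomial.X ^ N * t = th q r := by
  induction t using Polynomial.induction_on' with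
  | add p p' hp hp' =>
    obtain ⟨N, r, h⟩ := hp
    obtain ⟨M, s, h'⟩ := hp'
    refine ⟨N + M, l ^ M * r + l ^ N * s, ?_⟩
    rw [map_add, map_mul, map_mul, map_pow, map_pow, th_l q l h1 hl, ← h, ← h']
    ring
  | monomial n a =>
    obtain ⟨f, rfl⟩ := hq a
    refine ⟨f.totalDegree, l ^ n * ∑ i ∈ Finset.range (f.totalDegree + 1),
      l ^ (f.totalDegree - i) * homogeneousComponent i f, ?_⟩
    rw [← Polynomial.C_mul_X_pow_eq_monomial]
    conv_lhs => enter [2, 1, 2]; rw [← sum_homogeneousComponent f]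
    simp only [map_sum, map_mul, map_pow, th_l q l h1 hl]
    rw [Finset.mul_sum, Finset.sum_mul, Finset.mul_sum]
    refine Finset.sum_congr rfl fun i hi => ?_
    rw [th_hom q (homogeneousComponent_isHomogeneous i f)]
    have : f.totalDegree = (f.totalDegree - i) + i := by
      have := Finset.mem_range.mp hi
      omega
    conv_lhs => rw [this, pow_add]
    ring

theorem contract_hom (hl : l.IsHomogeneous 1) (J : Ideal (MvPolynomial σ K))
    (hJ : ∀ f ∈ J, ∀ d : ℕ, homogeneousComponent d f ∈ J) (hreg : ∀ x, l * x ∈ J → x ∈ J)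
    {d : ℕ} {x : MvPolynomial σ K} (hx : x.IsHomogeneous d)
    (h : x ∈ J ⊔ Ideal.span {l - 1}) : x ∈ J := by
  let W := Localization.Away l
  let a : MvPolynomial σ K →ₐ[K] W := Algebra.ofId (MvPolynomial σ K) W |>.restrictScalars K
  let c : W := IsLocalization.Away.invSelf l
  let ρ : MvPolynomial σ K →ₐ[K] W := aeval (fun i => c * a (X i))
  have hc : algebraMap (MvPolynomial σ K) W l * c = 1 := IsLocalization.Away.mul_invSelf l
  have hρ : ∀ {d : ℕ} {f : MvPolynomial σ K}, f.IsHomogeneous d →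
      ρ f = c ^ d * algebraMap (MvPolynomial σ K) W f := by
    intro d f hf
    have := aeval_scale (fun i => a (X i)) c hf
    rw [show aeval (fun i => a (X i)) = a from (aeval_unique a).symm] at this
    exact this
  have hl1 : ρ (l - 1) = 0 := by
    rw [map_sub, map_one, hρ hl, pow_one, mul_comm, hc, sub_self]
  have hρJ : J ⊔ Ideal.span {l - 1} ≤ (J.map (algebraMap (MvPolynomial σ K) W)).comap ρ := by
    refine sup_le (fun j hj => ?_) ?_
    · rw [Ideal.mem_comap, ← sum_homogeneousComponent j, map_sum]
      refine Ideal.sum_mem _ fun i _ => ?_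
      rw [hρ (homogeneousComponent_isHomogeneous i j)]
      exact Ideal.mul_mem_left _ _ (Ideal.mem_map_of_mem _ (hJ j hj i))
    · rw [Ideal.span_le, Set.singleton_subset_iff]
      rw [SetLike.mem_coe, Ideal.mem_comap, hl1]
      exact zero_mem _
  have h1 : ρ x ∈ J.map (algebraMap (MvPolynomial σ K) W) := hρJ h
  rw [hρ hx] at h1
  have h2 : algebraMap (MvPolynomial σ K) W x ∈ J.map (algebraMap (MvPolynomial σ K) W) := by
    have := Ideal.mul_mem_left _ (algebraMap (MvPolynomial σ K) W l ^ d) h1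
    rwa [← mul_assoc, ← mul_pow, hc, one_pow, one_mul] at this
  rw [IsLocalization.algebraMap_mem_map_algebraMap_iff (Submonoid.powers l)] at h2
  obtain ⟨m, ⟨k, rfl⟩, h3⟩ := h2
  induction k with
  | zero => simpa using h3
  | succ k ih =>
    apply ih
    apply hreg
    simpa [pow_succ', mul_assoc] using h3

theorem comap_th (hq : Function.Surjective q) (hker : RingHom.ker q = Ideal.span {l - 1}) (hl : l.IsHomogeneous 1) (J : Ideal (MvPolynomial σ K))
    (hJ : ∀ f ∈ J, ∀ d : ℕ, homogeneousComponent d f ∈ J) (hreg : ∀ x, l * x ∈ J → x ∈ J) :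
    ((J.map q).map Polynomial.C).comap
      (th q : MvPolynomial σ K →+* _) = J := by
  ext x
  rw [Ideal.mem_comap, Ideal.mem_map_C_iff]
  constructor
  · intro h
    rw [← sum_homogeneousComponent x]
    refine Ideal.sum_mem _ fun i _ => contract_hom l hl J hJ hreg
      (homogeneousComponent_isHomogeneous i x) ?_
    have := h i
    rw [RingHom.coe_coe, coeff_th, ← Ideal.mem_comap, Ideal.comap_map_of_surjective' _ hq] at this
    rwa [hker] at this
  · intro h i
    rw [RingHom.coe_coe, coeff_th]
    exact Ideal.mem_map_of_mem _ (hJ x h i)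

theorem prime_hom (J P : Ideal (MvPolynomial σ K))
    (hJ : ∀ f ∈ J, ∀ d : ℕ, homogeneousComponent d f ∈ J) (hP : P ∈ J.minimalPrimes) :
    ∀ f ∈ P, ∀ d : ℕ, homogeneousComponent d f ∈ P := by
  let _ := MvPolynomial.gradedAlgebra (σ := σ) (R := K)
  have hJ' : J.IsHomogeneous (homogeneousSubmodule σ K) := by
    intro i f hf
    have := hJ f hf i
    rwa [← decomposition.decompose'_apply] at this
  have h1 : J ≤ (P.homogeneousCore (homogeneousSubmodule σ K)).toIdeal := by
    rw [← hJ'.toIdeal_homogeneousCore_eq_self]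
    exact Ideal.homogeneousCore_mono _ hP.1.2
  have h2 := hP.2 ⟨Ideal.IsPrime.homogeneousCore hP.1.1, h1⟩ (Ideal.toIdeal_homogeneousCore_le _ _)
  have h3 : P.IsHomogeneous (homogeneousSubmodule σ K) := by
    rw [Ideal.IsHomogeneous.iff_eq]
    exact le_antisymm (Ideal.toIdeal_homogeneousCore_le _ _) h2
  exact fun f hf d => homogeneousComponent_mem_of_mem h3 hf d

end

theorem main_aux {σ K S : Type*} [CommRing K] [CommRing S] [Algebra K S]
    (q : MvPolynomial σ K →ₐ[K] S) (l : MvPolynomial σ K) (hq : Function.Surjective q)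
    (hker : RingHom.ker q = Ideal.span {l - 1}) (hl : l.IsHomogeneous 1)
    (J P : Ideal (MvPolynomial σ K))
    (hJ : ∀ f ∈ J, ∀ d : ℕ, homogeneousComponent d f ∈ J) (hreg : ∀ x, l * x ∈ J → x ∈ J)
    (hP : P ∈ J.minimalPrimes) (hlP : l ∉ P) :
    P ⊔ Ideal.span {l - 1} ∈ (J ⊔ Ideal.span {l - 1}).minimalPrimes ∧
      localMult (J ⊔ Ideal.span {l - 1}) (P ⊔ Ideal.span {l - 1}) = localMult J P := by
  have hPp : P.IsPrime := hP.1.1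
  have h1 : q l = 1 := by
    have : l - 1 ∈ RingHom.ker q := hker ▸ Ideal.mem_span_singleton_self _
    rw [RingHom.mem_ker, map_sub, map_one, sub_eq_zero] at this
    exact this
  have hPhom := prime_hom J P hJ hP
  have hPreg : ∀ x, l * x ∈ P → x ∈ P := fun x hx => (hPp.mem_or_mem hx).resolve_left hlP
  have cJ := comap_th q l hq hker hl J hJ hreg
  have cP := comap_th q l hq hker hl P hPhom hPreg
  have hsup : ∀ I : Ideal (MvPolynomial σ K), (I.map q).comap q = I ⊔ Ideal.span {l - 1} := by
    intro I
    rw [Ideal.comap_map_of_surjective' _ hq, hker]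
  have hXmem : ∀ (I : Ideal S) (N : ℕ) (t : Polynomial S),
      Polynomial.X ^ N * t ∈ I.map Polynomial.C → t ∈ I.map Polynomial.C := by
    intro I N t h
    rw [Ideal.mem_map_C_iff] at h ⊢
    intro n
    have := h (n + N)
    rwa [Polynomial.coeff_X_pow_mul] at this
  have mP : ∀ x, th q x ∈ (P.map q).map Polynomial.C ↔ x ∈ P := fun x => by
    conv_rhs => rw [← cP]
    rfl
  have hQT : ((P.map q).map (Polynomial.C : S →+* Polynomial S)).IsPrime := by
    refine ⟨?_, ?_⟩
    · intro h
      apply hPp.ne_top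
      rw [← cP, h, Ideal.comap_top]
    · intro a b hab
      obtain ⟨N, r, hr⟩ := th_surj q l h1 hq hl a
      obtain ⟨M, s, hs⟩ := th_surj q l h1 hq hl b
      have : th q (r * s) ∈ (P.map q).map Polynomial.C := by
        rw [map_mul, ← hr, ← hs, mul_mul_mul_comm]
        exact Ideal.mul_mem_left _ _ hab
      rw [mP] at this
      refine (hPp.mem_or_mem this).imp (fun h => ?_) (fun h => ?_)
      · exact hXmem _ N _ (by rw [hr, mP]; exact h)
      · exact hXmem _ M _ (by rw [hs, mP]; exact h)
  have hQ' : (P.map q).IsPrime := (Ideal.isPrime_map_C_iff_isPrime _).mp hQT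
  have hX : ∀ (N : ℕ), th q (l ^ N) ∉ (P.map q).map Polynomial.C := by
    intro N h
    rw [mP] at h
    exact hlP (hPp.mem_of_pow_mem _ h)
  refine ⟨⟨⟨?_, sup_le_sup_right hP.1.2 _⟩, ?_⟩, ?_⟩
  · rw [← hsup]
    exact Ideal.IsPrime.comap q
  · rintro Q1 ⟨hQ1, hJQ1⟩ hle
    have hspan : Ideal.span {l - 1} ≤ Q1 := le_sup_right.trans hJQ1
    have hQ1c : (Q1.map q).comap q = Q1 := by rw [hsup, sup_eq_left.mpr hspan]
    have hQ1p : (Q1.map q).IsPrime := Ideal.map_isPrime_of_surjective hq (by rw [hker]; exact hspan)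
    have hQ1le : Q1.map q ≤ P.map q := by
      rw [Ideal.map_le_iff_le_comap, hsup]
      exact hle
    have hP1 := hP.2 (y := ((Q1.map q).map (Polynomial.C : S →+* Polynomial S)).comap
        (th q : MvPolynomial σ K →+* _)) ⟨Ideal.IsPrime.comap _, by
          conv_lhs => rw [← cJ]
          exact Ideal.comap_mono (Ideal.map_mono (Ideal.map_mono (le_sup_left.trans hJQ1)))⟩ (by
          conv_rhs => rw [← cP]
          exact Ideal.comap_mono (Ideal.map_mono hQ1le))
    refine sup_le (fun f hf => ?_) hspan
    rw [← hQ1c, Ideal.mem_comap, ← eval_th]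
    have h2 : th q f ∈ (Q1.map q).map Polynomial.C := hP1 hf
    have h3 : (Q1.map q).map Polynomial.C ≤ (Q1.map q).comap (Polynomial.evalRingHom (1 : S)) := by
      rw [Ideal.map_le_iff_le_comap]
      intro s hs
      simpa using hs
    exact h3 h2
  · have e1 := lm_comap (q : MvPolynomial σ K →+* S) (P.map q) (J ⊔ Ideal.span {l - 1}) (J.map q)
      (fun x hx => by rw [← hsup] at hx; exact hx)
      (fun x hx => ⟨1, by
        rw [map_one]; exact fun h => hQ'.ne_top ((Ideal.eq_top_iff_one _).mpr h), by
        rw [one_mul, ← hsup]; exact hx⟩)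
      (fun t => by
        obtain ⟨r, rfl⟩ := hq t
        exact ⟨1, r, by
          rw [map_one]; exact fun h => hQ'.ne_top ((Ideal.eq_top_iff_one _).mpr h), by simp⟩)
    have e2 := lm_comap (th q : MvPolynomial σ K →+* Polynomial S)
      ((P.map q).map Polynomial.C) J ((J.map q).map Polynomial.C)
      (fun x hx => by rw [← cJ] at hx; exact hx)
      (fun x hx => ⟨1, by simpa using hX 0, by
        rw [one_mul, ← cJ]; exact hx⟩)
      (fun t => by
        obtain ⟨N, r, hr⟩ := th_surj q l h1 hq hl t
        refine ⟨l ^ N, r, hX N, ?_⟩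
        rw [RingHom.coe_coe, map_pow, th_l q l h1 hl, hr])
    rw [cP, lm_poly] at e2
    rw [e2, ← e1]
    congr 1
    exact (hsup P).symm

/-- If `P` is a minimal prime over a homogeneous ideal `J` with multiplicity `m` and `l` is a
linear form which is not a zero-divisor on `R ⧸ J`, then `P + ⟨l − 1⟩` is a minimal prime over
`J + ⟨l − 1⟩` with the same multiplicity `m`. -/
theorem minimalPrime_multiplicity_dehomogenize {n : ℕ}
    (J : Ideal (MvPolynomial (Fin (n + 1)) ℂ))
    (hJhom : ∀ f ∈ J, ∀ d : ℕ, homogeneousComponent d f ∈ J)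
    (l : MvPolynomial (Fin (n + 1)) ℂ) (hl : l.IsHomogeneous 1)
    (hnzd : Ideal.Quotient.mk J l ∈
      nonZeroDivisors (MvPolynomial (Fin (n + 1)) ℂ ⧸ J))
    (P : Ideal (MvPolynomial (Fin (n + 1)) ℂ)) (hP : P ∈ J.minimalPrimes)
    (m : ℕ) (hm : localMult J P = ((m : ℕ∞) : WithBot ℕ∞)) :
    P ⊔ Ideal.span {l - 1} ∈ (J ⊔ Ideal.span {l - 1}).minimalPrimes ∧
      localMult (J ⊔ Ideal.span {l - 1}) (P ⊔ Ideal.span {l - 1}) =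
        ((m : ℕ∞) : WithBot ℕ∞) := by


  have hreg : ∀ x, l * x ∈ J → x ∈ J := by
    intro x hx
    rw [← Ideal.Quotient.eq_zero_iff_mem] at hx ⊢
    rw [map_mul, mul_comm] at hx
    exact (mem_nonZeroDivisors_iff_right.mp hnzd) _ hx
  have hlP : l ∉ P := by
    intro h
    have hP' : P.map (Ideal.Quotient.mk J) ∈ minimalPrimes (MvPolynomial (Fin (n + 1)) ℂ ⧸ J) := by
      rw [Ideal.minimalPrimes_eq_comap] at hP
      obtain ⟨p, hp, rfl⟩ := hP
      rwa [Ideal.map_comap_of_surjective _ Ideal.Quotient.mk_surjective]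
    exact notMem_nonZeroDivisors_of_mem_mem_minimalPrimes (Ideal.mem_map_of_mem _ h) hP' hnzd
  rw [← hm]
  exact main_aux (Ideal.Quotient.mkₐ ℂ (Ideal.span {l - 1})) l
    (Ideal.Quotient.mkₐ_surjective ℂ _) (Ideal.Quotient.mkₐ_ker ℂ _) hl J P hJhom hreg hP hlP

end
end

section
/- Suppose no coordinate variable x_i lies in J, v ∈ (ℂ*)^{n+1} satisfies the patch condition for J, and set Î = J + ⟨v_0 x_0 + … + v_n x_n − 1⟩ ⊆ ℂ[x_0,…,x_n]. Let w ∈ ℤ^{n+1} satisfy w_i ≤ 0 for all i, w_j = 0 for some j, w_k ≠ 0 for some k, and assume the ideal generated by In_w(Î) in ℂ[x_0^{±1},…,x_n^{±1}] is proper. Set u = (w_1 − w_0, …, w_n − w_0) ∈ ℤ^n. Then the tropical multiplicity of In_w(Î) in the Laurent polynomial ring ℂ[x_0^{±1},…,x_n^{±1}] equals the tropical multiplicity of In_u(I) in the Laurent polynomial ring ℂ[x_1^{±1},…,x_n^{±1}]. -/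
open MvPolynomial
open scoped Classical

noncomputable section

/-- The weight `w · α` of an exponent vector `α`. -/
def wdeg {n : ℕ} (w : Fin n → ℝ) (α : Fin n →₀ ℕ) : ℝ := ∑ i, w i * (α i : ℝ)

/-- The initial form `In_w(f)` of a polynomial: the sum of the terms of `f` whose
`w`-weight is maximal over the support of `f` (and `In_w(0) = 0`). -/
def initialForm {R : Type*} [CommSemiring R] {n : ℕ} (w : Fin n → ℝ)
    (f : MvPolynomial (Fin n) R) : MvPolynomial (Fin n) R :=
  ∑ α ∈ f.support.filter (fun α => ∀ β ∈ f.support, wdeg w β ≤ wdeg w α),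
    monomial α (coeff α f)

/-- The initial ideal `In_w(I)`: the ideal generated by the initial forms of elements of `I`. -/
def initialIdeal {R : Type*} [CommRing R] {n : ℕ} (w : Fin n → ℝ)
    (I : Ideal (MvPolynomial (Fin n) R)) : Ideal (MvPolynomial (Fin n) R) :=
  Ideal.span {g | ∃ f ∈ I, g = initialForm w f}

/-- The Laurent polynomial ring in `n` variables over `R`. -/
abbrev MvLaurent (n : ℕ) (R : Type*) [CommRing R] : Type _ :=
  AddMonoidAlgebra R (Fin n →₀ ℤ)

/-- The canonical ring map from the polynomial ring to the Laurent polynomial ring. -/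
def polyToLaurent {n : ℕ} {R : Type*} [CommRing R] :
    MvPolynomial (Fin n) R →+* MvLaurent n R :=
  AddMonoidAlgebra.mapDomainRingHom R
    (Finsupp.mapRange.addMonoidHom (Nat.castAddMonoidHom ℤ))

/-- `v` satisfies the patch condition for a homogeneous ideal `J ⊆ ℂ[x₀,…,xₙ]`:
every nonzero common zero of `J` having some zero coordinate satisfies `v · a ≠ 0`. -/
def PatchCond {n : ℕ} (J : Ideal (MvPolynomial (Fin (n + 1)) ℂ)) (v : Fin (n + 1) → ℂ) : Prop :=
  ∀ a : Fin (n + 1) → ℂ, a ≠ 0 → (∀ g ∈ J, eval a g = 0) → (∃ i, a i = 0) →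
    ∑ i, v i * a i ≠ 0

/-- The homogeneous vanishing ideal of the projective closure of the affine variety of `I`:
the ideal generated by all homogeneous `F` with dehomogenization `F(1,x₁,…,xₙ) ∈ I`. -/
def projClosureIdeal {n : ℕ} (I : Ideal (MvPolynomial (Fin n) ℂ)) :
    Ideal (MvPolynomial (Fin (n + 1)) ℂ) :=
  Ideal.span {F | (∃ d, F.IsHomogeneous d) ∧
    aeval (Fin.cons (1 : MvPolynomial (Fin n) ℂ) X) F ∈ I}

/-- The tropical multiplicity of an ideal `A` of the polynomial ring: the sum over the
minimal primes `P` of the ideal `A^±` generated by `A` in the Laurent polynomial ring of the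
length of the `L_P`-module `(L ⧸ A^±)_P`. -/
def tropMult {n : ℕ} (A : Ideal (MvPolynomial (Fin n) ℂ)) : WithBot ℕ∞ :=
  ∑ᶠ P ∈ (Ideal.map polyToLaurent A).minimalPrimes, localMult (Ideal.map polyToLaurent A) P

/-! ### Part 1: the multiplicity only depends on the quotient ring -/

/-- Ideals of `R` containing `A` and saturated with respect to `S`. -/
abbrev SatIdeal {R : Type*} [CommRing R] (A : Ideal R) (S : Submonoid R) : Type _ :=
  {K : Ideal R // A ≤ K ∧ ∀ s ∈ S, ∀ r, s * r ∈ K → r ∈ K}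

/-- Submodules of the localized quotient correspond to saturated ideals containing `A`. -/
def satIso {R : Type*} [CommRing R] (A : Ideal R) (S : Submonoid R) :
    Submodule (Localization S) (LocalizedModule S (R ⧸ A)) ≃o SatIdeal A S where
  toFun N := ⟨((N.restrictScalars R).comap (LocalizedModule.mkLinearMap S (R ⧸ A))).comap
      (Submodule.mkQ A), by
    constructor
    · intro r hr
      have : (Submodule.mkQ A) r = 0 := (Submodule.Quotient.mk_eq_zero A).2 hr
      simp only [Submodule.mem_comap, this, Submodule.zero_mem]
    · intro s hs r h
      simp only [Submodule.mem_comap, Submodule.restrictScalars_mem] at h ⊢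
      have h1 : (LocalizedModule.mkLinearMap S (R ⧸ A)) (A.mkQ (s * r)) =
        s • (LocalizedModule.mkLinearMap S (R ⧸ A)) (A.mkQ r) := by
        rw [← smul_eq_mul, map_smul, map_smul]
      rw [h1] at h
      have h2 := N.smul_mem (Localization.mk 1 ⟨s, hs⟩) h
      rwa [← IsScalarTower.algebraMap_smul (Localization S) s, smul_smul,
        ← Localization.mk_one_eq_algebraMap, Localization.mk_mul, one_mul, mul_one,
        Localization.mk_self ⟨s, hs⟩, one_smul] at h2⟩
  invFun K := Submodule.localized' (Localization S) S (LocalizedModule.mkLinearMap S (R ⧸ A))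
    (Submodule.map A.mkQ K.1)
  left_inv N := by
    ext x
    rw [Submodule.mem_localized']
    constructor
    · rintro ⟨m, ⟨r, hr, rfl⟩, s, rfl⟩
      have hr' : LocalizedModule.mkLinearMap S (R ⧸ A) (A.mkQ r) ∈ N := hr
      have h2 := N.smul_mem (Localization.mk 1 s) hr'
      have : IsLocalizedModule.mk' (LocalizedModule.mkLinearMap S (R ⧸ A)) (A.mkQ r) s
        = (Localization.mk 1 s : Localization S) •
          LocalizedModule.mkLinearMap S (R ⧸ A) (A.mkQ r) := by
        simp [LocalizedModule.mkLinearMap_apply, LocalizedModule.mk_smul_mk,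
          ← IsLocalizedModule.mk_eq_mk']
      rw [this]; exact h2
    · intro hx
      induction x using LocalizedModule.induction_on with
      | h m s =>
        obtain ⟨r, rfl⟩ := Submodule.mkQ_surjective A m
        refine ⟨_, ⟨r, ?_, rfl⟩, s, by simp [← IsLocalizedModule.mk_eq_mk']⟩
        have h2 := N.smul_mem (algebraMap R (Localization S) s) hx
        show LocalizedModule.mkLinearMap S (R ⧸ A) (A.mkQ r) ∈ N
        convert h2 using 1
        rw [algebraMap_smul, LocalizedModule.mkLinearMap_apply]
        rw [LocalizedModule.smul'_mk]
        exact (LocalizedModule.mk_cancel s _).symm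
  right_inv K := by
    obtain ⟨K, hA, hS⟩ := K
    apply Subtype.ext
    ext r
    simp only [Submodule.mem_comap, Submodule.restrictScalars_mem]
    rw [Submodule.mem_localized']
    constructor
    · rintro ⟨m, ⟨t, ht, rfl⟩, s, h⟩
      rw [← IsLocalizedModule.mk_eq_mk', LocalizedModule.mkLinearMap_apply,
        LocalizedModule.mk_eq] at h
      obtain ⟨u, hu⟩ := h
      have h3 : A.mkQ (u.1 * (1 * t) - u.1 * (s.1 * r)) = 0 := by
        rw [map_sub, sub_eq_zero]
        change A.mkQ (u.1 • ((1 : R) • t)) = A.mkQ (u.1 • s.1 • r)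
        simp only [map_smul]
        exact hu
      have h4 : u.1 * (1 * t) - u.1 * (s.1 * r) ∈ K := hA ((Submodule.Quotient.mk_eq_zero A).1 h3)
      have h5 : u.1 * (s.1 * r) ∈ K := by
        have := K.sub_mem (K.mul_mem_left u.1 (K.mul_mem_left 1 ht)) h4
        simpa using this
      exact hS _ s.2 _ (hS _ u.2 _ h5)
    · intro hr
      exact ⟨_, ⟨r, hr, rfl⟩, 1, by simp⟩
  map_rel_iff' {N N'} := by
    constructor
    · intro h x hx
      induction x using LocalizedModule.induction_on with
      | h m s =>
        obtain ⟨r, rfl⟩ := Submodule.mkQ_surjective A m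
        have h2 := N.smul_mem (algebraMap R (Localization S) s) hx
        have e : (algebraMap R (Localization S) s) • LocalizedModule.mk (A.mkQ r) s =
            LocalizedModule.mkLinearMap S (R ⧸ A) (A.mkQ r) := by
          rw [algebraMap_smul, LocalizedModule.mkLinearMap_apply]
          rw [LocalizedModule.smul'_mk]
          exact (LocalizedModule.mk_cancel s _)
        rw [e] at h2
        have h3 : LocalizedModule.mkLinearMap S (R ⧸ A) (A.mkQ r) ∈ N' := h (x := r) h2
        have h4 := N'.smul_mem (Localization.mk 1 s) h3
        simpa [LocalizedModule.mkLinearMap_apply, LocalizedModule.mk_smul_mk] using h4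
    · intro h r hr
      exact h hr

lemma satComap {R B : Type*} [CommRing R] [CommRing B] (f : R →+* B)
    (hf : Function.Surjective f) (p : Ideal B) [p.IsPrime] :
    Order.krullDim (SatIdeal (RingHom.ker f) (p.comap f).primeCompl) =
      Order.krullDim (SatIdeal (⊥ : Ideal B) p.primeCompl) := by
  have H1 : ∀ N : SatIdeal (⊥ : Ideal B) p.primeCompl, RingHom.ker f ≤ N.1.comap f ∧
      ∀ s ∈ (p.comap f).primeCompl, ∀ r, s * r ∈ N.1.comap f → r ∈ N.1.comap f := by
    intro N
    refine ⟨fun r hr => ?_, fun s hs r h => ?_⟩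
    · rw [Ideal.mem_comap, (RingHom.mem_ker).1 hr]; exact zero_mem _
    · rw [Ideal.mem_comap, map_mul] at h
      exact N.2.2 (f s) hs _ h
  have H2 : ∀ K : SatIdeal (RingHom.ker f) (p.comap f).primeCompl,
      ∀ s ∈ p.primeCompl, ∀ r, s * r ∈ K.1.map f → r ∈ K.1.map f := by
    intro K s hs r h
    obtain ⟨s, rfl⟩ := hf s
    obtain ⟨r, rfl⟩ := hf r
    rw [← map_mul] at h
    obtain ⟨t, ht, hts⟩ := (Ideal.mem_map_iff_of_surjective f hf).1 h
    have h1 : s * r ∈ K.1 := by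
      have := K.1.sub_mem ht (K.2.1 (show t - s * r ∈ RingHom.ker f by
        rw [RingHom.mem_ker, map_sub, hts, sub_self]))
      simpa using this
    exact Ideal.mem_map_of_mem f (K.2.2 s hs r h1)
  let e : SatIdeal (⊥ : Ideal B) p.primeCompl ≃ SatIdeal (RingHom.ker f) (p.comap f).primeCompl :=
    { toFun := fun N => ⟨N.1.comap f, H1 N⟩
      invFun := fun K => ⟨K.1.map f, bot_le, H2 K⟩
      left_inv := fun N => Subtype.ext (Ideal.map_comap_of_surjective f hf _)
      right_inv := fun K => Subtype.ext
        ((Ideal.comap_map_of_surjective' f hf K.1).trans (sup_eq_left.2 K.2.1)) }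
  have he : ∀ N N', e N ≤ e N' ↔ N ≤ N' := by
    intro N N'
    constructor
    · intro h b hb
      obtain ⟨r, rfl⟩ := hf b
      exact h (x := r) hb
    · intro h
      exact Ideal.comap_mono (f := f) h
  exact (Order.krullDim_eq_of_orderIso ⟨e, he _ _⟩).symm

lemma mult_quot {R B : Type*} [CommRing R] [CommRing B] (f : R →+* B)
    (hf : Function.Surjective f) :
    ∑ᶠ P ∈ (RingHom.ker f).minimalPrimes, localMult (RingHom.ker f) P =
      ∑ᶠ p ∈ (⊥ : Ideal B).minimalPrimes,
        (if h : p.IsPrime then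
          letI := h
          Order.krullDim (SatIdeal (⊥ : Ideal B) p.primeCompl) else 0) := by
  symm
  refine finsum_mem_eq_of_bijOn (Ideal.comap f) ⟨?_, ?_, ?_⟩ ?_
  · intro p hp
    have := Ideal.comap_minimalPrimes_eq_of_surjective hf (⊥ : Ideal B)
    rw [← RingHom.ker_eq_comap_bot] at this
    rw [this]
    exact ⟨p, hp, rfl⟩
  · exact (Ideal.comap_injective_of_surjective f hf).injOn
  · intro P hP
    have := Ideal.comap_minimalPrimes_eq_of_surjective hf (⊥ : Ideal B)
    rw [← RingHom.ker_eq_comap_bot] at this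
    rwa [this] at hP
  · intro p hp
    have hp' : p.IsPrime := hp.1.1
    have hp2 : (p.comap f).IsPrime := Ideal.comap_isPrime f p
    rw [localMult, dif_pos hp', dif_pos hp2]
    unfold moduleLength
    rw [Order.krullDim_eq_of_orderIso (satIso (RingHom.ker f) (p.comap f).primeCompl)]
    exact (satComap f hf p).symm

/-! ### Part 2: leading forms -/

/-- `g` is the weight-`m` part of `f`, and `f` has no terms of weight above `m`. -/
def Lead {n : ℕ} (w : Fin n → ℝ) (m : ℝ) (f g : MvPolynomial (Fin n) ℂ) : Prop :=
  g ∈ restrictSupport ℂ {α | wdeg w α = m} ∧ f - g ∈ restrictSupport ℂ {α | wdeg w α < m}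

lemma wdeg_add {n : ℕ} (w : Fin n → ℝ) (α β : Fin n →₀ ℕ) :
    wdeg w (α + β) = wdeg w α + wdeg w β := by
  simp [wdeg, mul_add, Finset.sum_add_distrib]

lemma rs_coeff {n : ℕ} {s : Set (Fin n →₀ ℕ)} {f : MvPolynomial (Fin n) ℂ} :
    f ∈ restrictSupport ℂ s ↔ ∀ α, α ∉ s → coeff α f = 0 := by
  rw [mem_restrictSupport_iff, Set.subset_def]
  refine forall_congr' fun α => ?_
  rw [Finset.mem_coe, mem_support_iff]
  tauto

lemma rs_le {n : ℕ} {M : Type*} [AddCommGroup M] [Module ℂ M] {s : Set (Fin n →₀ ℕ)}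
    (T : MvPolynomial (Fin n) ℂ →ₗ[ℂ] M) (N : Submodule ℂ M)
    (h : ∀ α ∈ s, T (monomial α 1) ∈ N) {f : MvPolynomial (Fin n) ℂ}
    (hf : f ∈ restrictSupport ℂ s) : T f ∈ N := by
  have : restrictSupport ℂ s ≤ N.comap T := by
    rw [restrictSupport_eq_span, Submodule.span_le]
    rintro _ ⟨α, hα, rfl⟩
    exact h α hα
  exact this hf

lemma rs_mul {n : ℕ} {s t u : Set (Fin n →₀ ℕ)} {p q : MvPolynomial (Fin n) ℂ}
    (hp : p ∈ restrictSupport ℂ s) (hq : q ∈ restrictSupport ℂ t)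
    (h : ∀ a ∈ s, ∀ b ∈ t, a + b ∈ u) : p * q ∈ restrictSupport ℂ u := by
  refine rs_le (LinearMap.mulRight ℂ q) _ (fun a ha => ?_) hp
  refine rs_le (LinearMap.mulLeft ℂ (monomial a 1)) _ (fun b hb => ?_) hq
  simp only [LinearMap.mulLeft_apply, monomial_mul, mul_one]
  exact (monomial_mem_restrictSupport ℂ).2 (Or.inl (h a ha b hb))

lemma Lead.monomial {n : ℕ} (w : Fin n → ℝ) (α : Fin n →₀ ℕ) :
    Lead w (wdeg w α) (monomial α 1) (MvPolynomial.monomial α 1) := by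
  refine ⟨(monomial_mem_restrictSupport ℂ).2 (Or.inl rfl), ?_⟩
  rw [sub_self]; exact zero_mem _

lemma Lead.one {n : ℕ} (w : Fin n → ℝ) : Lead w 0 1 1 := by
  have := Lead.monomial w 0
  simpa [wdeg] using this

lemma Lead.add {n : ℕ} {w : Fin n → ℝ} {m : ℝ} {f g f' g' : MvPolynomial (Fin n) ℂ}
    (h : Lead w m f g) (h' : Lead w m f' g') : Lead w m (f + f') (g + g') :=
  ⟨add_mem h.1 h'.1, by rw [add_sub_add_comm]; exact add_mem h.2 h'.2⟩

lemma Lead.sub {n : ℕ} {w : Fin n → ℝ} {m : ℝ} {f g f' g' : MvPolynomial (Fin n) ℂ}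
    (h : Lead w m f g) (h' : Lead w m f' g') : Lead w m (f - f') (g - g') :=
  ⟨sub_mem h.1 h'.1, by rw [sub_sub_sub_comm]; exact sub_mem h.2 h'.2⟩

lemma Lead.mul {n : ℕ} {w : Fin n → ℝ} {m m' : ℝ} {f g f' g' : MvPolynomial (Fin n) ℂ}
    (h : Lead w m f g) (h' : Lead w m' f' g') : Lead w (m + m') (f * f') (g * g') := by
  refine ⟨rs_mul h.1 h'.1 ?_, ?_⟩
  · intro a ha b hb
    simp only [Set.mem_ofPred_eq] at *
    rw [wdeg_add, ha, hb]
  · have : f * f' - g * g' = (f - g) * (f' - g') + (f - g) * g' + g * (f' - g') := by ring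
    rw [this]
    refine add_mem (add_mem (rs_mul h.2 h'.2 ?_) (rs_mul h.2 h'.1 ?_)) (rs_mul h.1 h'.2 ?_) <;>
    · intro a ha b hb
      simp only [Set.mem_ofPred_eq] at *
      rw [wdeg_add]
      linarith

lemma Lead.pow {n : ℕ} {w : Fin n → ℝ} {f g : MvPolynomial (Fin n) ℂ}
    (h : Lead w 0 f g) (k : ℕ) : Lead w 0 (f ^ k) (g ^ k) := by
  induction k with
  | zero => simpa using Lead.one w
  | succ k ih =>
    have := ih.mul h
    simpa [pow_succ] using this

lemma coeff_initialForm {n : ℕ} (w : Fin n → ℝ) (f : MvPolynomial (Fin n) ℂ) (α : Fin n →₀ ℕ) :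
    coeff α (initialForm w f) =
      if ∀ β ∈ f.support, wdeg w β ≤ wdeg w α then coeff α f else 0 := by
  rw [initialForm, coeff_sum]
  simp only [coeff_monomial, Finset.sum_ite_eq', Finset.mem_filter, mem_support_iff]
  by_cases h : coeff α f = 0 <;> simp [h]

lemma exists_lead {n : ℕ} (w : Fin n → ℝ) (f : MvPolynomial (Fin n) ℂ) :
    ∃ m, Lead w m f (initialForm w f) := by
  by_cases hf : f = 0
  · subst hf
    refine ⟨0, ?_⟩
    simp [initialForm, Lead]
  · have hne : f.support.Nonempty := by rwa [Finset.nonempty_iff_ne_empty, Ne, support_eq_empty]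
    obtain ⟨α₀, h0, hmax⟩ := Finset.exists_max_image f.support (wdeg w) hne
    refine ⟨wdeg w α₀, rs_coeff.2 fun α hα => ?_, rs_coeff.2 fun α hα => ?_⟩
    · rw [coeff_initialForm]
      split_ifs with h
      · by_contra hc
        exact hα (le_antisymm (hmax α (mem_support_iff.2 hc)) (h α₀ h0))
      · rfl
    · simp only [Set.mem_ofPred_eq, not_lt] at hα
      rw [coeff_sub, coeff_initialForm, if_pos, sub_self]
      exact fun β hβ => (hmax β hβ).trans hα

lemma Lead.mem {n : ℕ} {w : Fin n → ℝ} {m : ℝ} {f g : MvPolynomial (Fin n) ℂ}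
    (h : Lead w m f g) {A : Ideal (MvPolynomial (Fin n) ℂ)} (hf : f ∈ A) :
    g ∈ initialIdeal w A := by
  by_cases hg : g = 0
  · rw [hg]; exact zero_mem _
  have h1 := rs_coeff.1 h.1
  have h2 : ∀ α, ¬ wdeg w α < m → coeff α f = coeff α g := fun α hα => by
    have := rs_coeff.1 h.2 α hα
    rwa [coeff_sub, sub_eq_zero] at this
  obtain ⟨α₀, h0⟩ := MvPolynomial.ne_zero_iff.1 hg
  have hw0 : wdeg w α₀ = m := by
    by_contra hc
    exact h0 (h1 _ hc)
  refine Ideal.subset_span ⟨f, hf, ?_⟩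
  ext α
  have hle : ∀ β ∈ f.support, wdeg w β ≤ m := by
    intro β hβ
    by_contra hc
    rw [mem_support_iff, h2 β (by linarith)] at hβ
    exact hβ (h1 β (by simp only [Set.mem_ofPred_eq]; linarith))
  rw [coeff_initialForm]
  split_ifs with hα
  · have : m ≤ wdeg w α := by
      rw [← hw0]
      exact hα _ (by rw [mem_support_iff, h2 _ (by linarith)]; exact h0)
    exact (h2 α (by linarith)).symm
  · apply h1
    intro hc
    simp only [Set.mem_ofPred_eq] at hc
    exact hα (fun β hβ => by rw [hc]; exact hle β hβ)

lemma kills_initial {n : ℕ} {R : Type*} [CommRing R] (w : Fin n → ℝ)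
    (A : Ideal (MvPolynomial (Fin n) ℂ)) (φ : MvPolynomial (Fin n) ℂ →+* R)
    (h : ∀ f ∈ A, ∀ m g, Lead w m f g → g = initialForm w f → φ g = 0) :
    initialIdeal w A ≤ RingHom.ker φ := by
  refine Ideal.span_le.2 ?_
  rintro _ ⟨f, hf, rfl⟩
  obtain ⟨m, hm⟩ := exists_lead w f
  exact h f hf m _ hm rfl

lemma Lead.map {n n' : ℕ} {w : Fin n → ℝ} {w' : Fin n' → ℝ} {m : ℝ} (c : ℝ)
    {f g : MvPolynomial (Fin n) ℂ} (h : Lead w m f g) (s : Set (Fin n →₀ ℕ))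
    (hf : f ∈ restrictSupport ℂ s) (hg : g ∈ restrictSupport ℂ s)
    (T T₀ : MvPolynomial (Fin n) ℂ →ₗ[ℂ] MvPolynomial (Fin n') ℂ)
    (hT : ∀ α ∈ s, Lead w' (wdeg w α + c) (T (MvPolynomial.monomial α 1))
      (T₀ (MvPolynomial.monomial α 1))) :
    Lead w' (m + c) (T f) (T₀ g) := by
  have hg' : g ∈ restrictSupport ℂ (s ∩ {α | wdeg w α = m}) :=
    rs_coeff.2 fun α hα => by
      by_cases h1 : α ∈ s
      · exact rs_coeff.1 h.1 α (fun h2 => hα ⟨h1, h2⟩)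
      · exact rs_coeff.1 hg α h1
  have hfg : f - g ∈ restrictSupport ℂ (s ∩ {α | wdeg w α < m}) :=
    rs_coeff.2 fun α hα => by
      by_cases h1 : α ∈ s
      · exact rs_coeff.1 h.2 α (fun h2 => hα ⟨h1, h2⟩)
      · exact rs_coeff.1 (sub_mem hf hg) α h1
  refine ⟨rs_le T₀ _ ?_ hg', ?_⟩
  · rintro α ⟨h1, h2⟩
    have := (hT α h1).1
    rwa [show wdeg w α = m from h2] at this
  · have : T f - T₀ g = (T - T₀) g + T (f - g) := by
      simp only [LinearMap.sub_apply, map_sub]; abel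
    rw [this]
    refine add_mem (rs_le (T - T₀) _ ?_ hg') (rs_le T _ ?_ hfg)
    · rintro α ⟨h1, h2⟩
      have := (hT α h1).2
      rwa [show wdeg w α = m from h2] at this
    · rintro α ⟨h1, h2⟩
      have h2' : wdeg w α < m := h2
      have h3 := restrictSupport_mono (R := ℂ) (t := {α | wdeg w' α < m + c})
        (by intro β hβ; simp only [Set.mem_ofPred_eq] at *; linarith) (hT α h1).1
      have h4 := restrictSupport_mono (R := ℂ) (t := {α | wdeg w' α < m + c})
        (by intro β hβ; simp only [Set.mem_ofPred_eq] at *; linarith) (hT α h1).2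
      simpa using add_mem h4 h3

lemma exists_lead_of_le {n : ℕ} (w : Fin n → ℝ) (m : ℝ) (f : MvPolynomial (Fin n) ℂ)
    (h : ∀ α, wdeg w α ≤ m) : ∃ g, Lead w m f g := by
  refine ⟨∑ α ∈ f.support.filter (fun α => wdeg w α = m), MvPolynomial.monomial α (coeff α f),
    rs_coeff.2 fun α hα => ?_, rs_coeff.2 fun α hα => ?_⟩
  · simp only [Set.mem_ofPred_eq] at hα
    simp only [coeff_sum, coeff_monomial, Finset.sum_ite_eq', Finset.mem_filter]
    rw [if_neg]
    exact fun h => hα h.2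
  · simp only [Set.mem_ofPred_eq, not_lt] at hα
    have : wdeg w α = m := le_antisymm (h α) hα
    simp only [coeff_sub, coeff_sum, coeff_monomial, Finset.sum_ite_eq', Finset.mem_filter, this,
      and_true, mem_support_iff]
    by_cases hc : coeff α f = 0 <;> simp [hc]

/-! ### Part 3: (de)homogenization -/

/-- The linear map `x^α ↦ x^α ℓ^(N-|α|)`. -/
def lhom {n : ℕ} (l : MvPolynomial (Fin n) ℂ) (N : ℕ) :
    MvPolynomial (Fin n) ℂ →ₗ[ℂ] MvPolynomial (Fin n) ℂ :=
  (basisMonomials (Fin n) ℂ).constr ℂ (fun α => monomial α 1 * l ^ (N - α.degree))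

lemma lhom_monomial {n : ℕ} (l : MvPolynomial (Fin n) ℂ) (N : ℕ) (α : Fin n →₀ ℕ) :
    lhom l N (monomial α 1) = monomial α 1 * l ^ (N - α.degree) := by
  have := (basisMonomials (Fin n) ℂ).constr_basis ℂ
    (fun α => (monomial α (1 : ℂ)) * l ^ (N - α.degree)) α
  rwa [coe_basisMonomials] at this

lemma homog_rs {n : ℕ} {F : MvPolynomial (Fin n) ℂ} {d : ℕ} (h : F.IsHomogeneous d) :
    F ∈ restrictSupport ℂ {α | α.degree = d} :=
  rs_coeff.2 fun α hα => by
    by_contra hc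
    exact hα (by
      have := h hc
      change α.degree = d
      rw [Finsupp.degree_eq_weight_one]; exact this)

lemma lhom_homog {n : ℕ} (l : MvPolynomial (Fin n) ℂ) (N : ℕ) {F : MvPolynomial (Fin n) ℂ} {d : ℕ}
    (h : F.IsHomogeneous d) : lhom l N F = F * l ^ (N - d) := by
  have := rs_le (lhom l N - LinearMap.mulRight ℂ (l ^ (N - d))) ⊥ ?_ (homog_rs h)
  · simpa [sub_eq_zero] using this
  · intro α hα
    simp only [Set.mem_ofPred_eq] at hα
    simp [lhom_monomial, hα]

/-- The linear map homogenizing to degree `d`. -/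
def xhom {n : ℕ} (d : ℕ) :
    MvPolynomial (Fin n) ℂ →ₗ[ℂ] MvPolynomial (Fin (n + 1)) ℂ :=
  (basisMonomials (Fin n) ℂ).constr ℂ (fun α => monomial (Finsupp.cons (d - α.degree) α) 1)

lemma xhom_monomial {n : ℕ} (d : ℕ) (α : Fin n →₀ ℕ) :
    xhom d (monomial α 1) = monomial (Finsupp.cons (d - α.degree) α) 1 := by
  have := (basisMonomials (Fin n) ℂ).constr_basis ℂ
    (fun α => monomial (Finsupp.cons (d - α.degree) α) (1 : ℂ)) α
  rwa [coe_basisMonomials] at this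

/-- Dehomogenization. -/
abbrev dehom {n : ℕ} : MvPolynomial (Fin (n + 1)) ℂ →ₐ[ℂ] MvPolynomial (Fin n) ℂ :=
  aeval (Fin.cons (1 : MvPolynomial (Fin n) ℂ) X)

lemma dehom_monomial {n : ℕ} (a : ℕ) (α : Fin n →₀ ℕ) :
    dehom (monomial (Finsupp.cons a α) 1) = monomial α 1 := by
  rw [dehom, aeval_monomial, map_one, one_mul, Finsupp.prod_fintype _ _ (by simp),
    Fin.prod_univ_succ, monomial_eq, Finsupp.prod_fintype _ _ (by simp)]
  simp

lemma degree_cons {n : ℕ} (a : ℕ) (α : Fin n →₀ ℕ) :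
    (Finsupp.cons a α).degree = a + α.degree := by
  simp [Finsupp.degree_eq_sum, Fin.sum_univ_succ]

lemma wdeg_cons {n : ℕ} (w : Fin (n + 1) → ℝ) (a : ℕ) (α : Fin n →₀ ℕ) :
    wdeg w (Finsupp.cons a α) =
      wdeg (fun i : Fin n => w i.succ - w 0) α + w 0 * ((a + α.degree : ℕ) : ℝ) := by
  simp [wdeg, Fin.sum_univ_succ, sub_mul, Finset.sum_sub_distrib, Finsupp.degree_eq_sum,
    Finset.mul_sum, mul_add]
  ring

lemma proj_homog {n : ℕ} (I : Ideal (MvPolynomial (Fin n) ℂ)) {F : MvPolynomial (Fin (n + 1)) ℂ}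
    (hF : F ∈ projClosureIdeal I) (d : ℕ) :
    homogeneousComponent d F ∈ projClosureIdeal I := by
  let _ := MvPolynomial.gradedAlgebra (σ := Fin (n + 1)) (R := ℂ)
  refine homogeneousComponent_mem_of_mem (Ideal.homogeneous_span _ _ ?_) hF d
  rintro x ⟨⟨d, hd⟩, -⟩
  exact ⟨d, hd⟩

lemma proj_dehom {n : ℕ} (I : Ideal (MvPolynomial (Fin n) ℂ)) {F : MvPolynomial (Fin (n + 1)) ℂ}
    (hF : F ∈ projClosureIdeal I) : dehom F ∈ I := by
  have : projClosureIdeal I ≤ I.comap (dehom : MvPolynomial (Fin (n + 1)) ℂ →ₐ[ℂ] _) :=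
    Ideal.span_le.2 fun F hF => hF.2
  exact this hF

lemma hom_formula {n : ℕ} {R : Type*} [CommRing R] [Algebra ℂ R]
    (ψ : MvPolynomial (Fin (n + 1)) ℂ →ₐ[ℂ] R) (θ : MvPolynomial (Fin n) ℂ →ₐ[ℂ] R) (c : R)
    (h : ∀ i, ψ (X i) = c * θ (dehom (X i))) {F : MvPolynomial (Fin (n + 1)) ℂ} {d : ℕ}
    (hF : F.IsHomogeneous d) : ψ F = c ^ d * θ (dehom F) := by
  have := rs_le (ψ.toLinearMap - (LinearMap.mulLeft ℂ (c ^ d)).comp (θ.comp dehom).toLinearMap) ⊥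
    ?_ (homog_rs hF)
  · simpa [sub_eq_zero] using this
  · intro α hα
    simp only [Set.mem_ofPred_eq] at hα
    have e : ∀ φ : MvPolynomial (Fin (n + 1)) ℂ →ₐ[ℂ] R,
        φ (monomial α 1) = ∏ i, φ (X i) ^ α i := by
      intro φ
      rw [monomial_eq, map_one, one_mul, Finsupp.prod_fintype _ _ (by simp), map_prod]
      simp
    have e2 := e (θ.comp dehom)
    simp only [LinearMap.sub_apply, AlgHom.toLinearMap_apply, LinearMap.comp_apply,
      LinearMap.mulLeft_apply, Submodule.mem_bot, sub_eq_zero]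
    rw [e, e2, ← hα, Finsupp.degree_eq_sum, ← Finset.prod_pow_eq_pow_sum, ← Finset.prod_mul_distrib]
    refine Finset.prod_congr rfl fun i _ => ?_
    rw [h, mul_pow]; rfl

lemma killJ {n : ℕ} {R : Type*} [CommRing R] [Algebra ℂ R]
    (ψ : MvPolynomial (Fin (n + 1)) ℂ →ₐ[ℂ] R) (θ : MvPolynomial (Fin n) ℂ →ₐ[ℂ] R) (c : R)
    (h : ∀ i, ψ (X i) = c * θ (dehom (X i))) (I : Ideal (MvPolynomial (Fin n) ℂ))
    (w : Fin (n + 1) → ℝ)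
    (hθ : initialIdeal (fun i : Fin n => w i.succ - w 0) I ≤ RingHom.ker (θ : _ →+* R)) :
    initialIdeal w (projClosureIdeal I) ≤ RingHom.ker (ψ : _ →+* R) := by
  refine kills_initial _ _ _ fun F hF m G hL _ => ?_
  rw [← sum_homogeneousComponent G, map_sum]
  refine Finset.sum_eq_zero fun d _ => ?_
  have hLd : Lead w (m + 0) (homogeneousComponent d F) (homogeneousComponent d G) := by
    refine hL.map 0 Set.univ (by simp) (by simp) (homogeneousComponent d) (homogeneousComponent d)
      fun α _ => ?_
    have : homogeneousComponent d (monomial α (1 : ℂ)) =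
        if α.degree = d then monomial α 1 else 0 := by
      ext β
      rw [coeff_homogeneousComponent]
      by_cases hab : α = β
      · subst hab
        split_ifs <;> simp
      · split_ifs <;> simp [hab]
    rw [this, add_zero]
    split_ifs
    · exact Lead.monomial w α
    · exact ⟨zero_mem _, by rw [sub_zero]; exact zero_mem _⟩
  rw [add_zero] at hLd
  have hF' := homogeneousComponent_isHomogeneous d F
  have hG' := homogeneousComponent_isHomogeneous d G
  have hLd' : Lead (fun i : Fin n => w i.succ - w 0) (m + -(w 0 * d))
      (dehom (homogeneousComponent d F)) (dehom (homogeneousComponent d G)) := by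
    refine hLd.map _ {α | α.degree = d} (homog_rs hF') (homog_rs hG') dehom.toLinearMap
      dehom.toLinearMap fun α hα => ?_
    simp only [Set.mem_ofPred_eq] at hα
    rw [← Finsupp.cons_tail α] at hα ⊢
    rw [degree_cons] at hα
    rw [AlgHom.toLinearMap_apply, dehom_monomial, wdeg_cons, hα]
    have := Lead.monomial (fun i : Fin n => w i.succ - w 0) α.tail
    convert this using 1
    ring
  have := hθ (hLd'.mem (proj_dehom I (proj_homog I hF d)))
  rw [RingHom.mem_ker] at this
  change θ _ = 0 at this
  have h3 := hom_formula ψ θ c h hG'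
  change ψ _ = 0
  rw [h3]
  rw [this, mul_zero]

lemma killI {n : ℕ} {R : Type*} [CommRing R] [Algebra ℂ R]
    (ψ : MvPolynomial (Fin (n + 1)) ℂ →ₐ[ℂ] R) (θ : MvPolynomial (Fin n) ℂ →ₐ[ℂ] R) (c : R)
    (hc : IsUnit c)
    (h : ∀ i, ψ (X i) = c * θ (dehom (X i))) (I : Ideal (MvPolynomial (Fin n) ℂ))
    (w : Fin (n + 1) → ℝ)
    (hψ : initialIdeal w (projClosureIdeal I) ≤ RingHom.ker (ψ : _ →+* R)) :
    initialIdeal (fun i : Fin n => w i.succ - w 0) I ≤ RingHom.ker (θ : _ →+* R) := by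
  refine kills_initial _ _ _ fun f hf m g hL hg => ?_
  set d := f.totalDegree with hd
  have hfd : f ∈ restrictSupport ℂ {α | α.degree ≤ d} := by
    rw [mem_restrictSupport_iff]
    intro α hα
    exact le_totalDegree hα
  have hgd : g ∈ restrictSupport ℂ {α | α.degree ≤ d} := by
    refine rs_coeff.2 fun α hα => ?_
    rw [hg, coeff_initialForm]
    split_ifs
    · exact rs_coeff.1 hfd α hα
    · rfl
  have key : ∀ p ∈ restrictSupport ℂ {α : Fin n →₀ ℕ | α.degree ≤ d},
      dehom (xhom d p) = p ∧ (xhom d p).IsHomogeneous d := by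
    intro p hp
    constructor
    · have := rs_le (dehom.toLinearMap ∘ₗ xhom d - LinearMap.id) ⊥ ?_ hp
      · simpa [sub_eq_zero] using this
      · intro α hα
        simp only [LinearMap.sub_apply, LinearMap.comp_apply, xhom_monomial,
          AlgHom.toLinearMap_apply, dehom_monomial, LinearMap.id_apply, sub_self, zero_mem]
    · have := rs_le (xhom d) (homogeneousSubmodule (Fin (n + 1)) ℂ d) ?_ hp
      · exact this
      · intro α hα
        rw [xhom_monomial, mem_homogeneousSubmodule]
        apply isHomogeneous_monomial
        simp only [Set.mem_ofPred_eq] at hα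
        rw [degree_cons]; omega
  have hL' : Lead w (m + w 0 * d) (xhom d f) (xhom d g) := by
    refine hL.map _ _ hfd hgd _ _ fun α hα => ?_
    simp only [Set.mem_ofPred_eq] at hα
    rw [xhom_monomial]
    have := Lead.monomial w (Finsupp.cons (d - α.degree) α)
    rwa [wdeg_cons, Nat.sub_add_cancel hα] at this
  have h1 : xhom d f ∈ projClosureIdeal I :=
    Ideal.subset_span ⟨⟨d, (key f hfd).2⟩, by
      have := (key f hfd).1
      rw [dehom] at this
      rwa [this]⟩
  have h2 := hψ (hL'.mem h1)
  rw [RingHom.mem_ker] at h2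
  have h3 := hom_formula ψ θ c h (key g hgd).2
  rw [(key g hgd).1] at h3
  change ψ _ = 0 at h2
  rw [h2] at h3
  exact ((hc.pow d).mul_right_eq_zero).1 h3.symm

/-! ### Part 4: the patch -/

lemma lhom_mem {n : ℕ} (I : Ideal (MvPolynomial (Fin n) ℂ)) (l : MvPolynomial (Fin (n + 1)) ℂ)
    (hl : l.IsHomogeneous 1) {f : MvPolynomial (Fin (n + 1)) ℂ}
    (hf : f ∈ projClosureIdeal I ⊔ Ideal.span {l - 1}) :
    ∃ N₀, ∀ N ≥ N₀, lhom l N f ∈ projClosureIdeal I := by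
  let W : Submodule ℂ (MvPolynomial (Fin (n + 1)) ℂ) :=
    { carrier := {f | ∃ N₀, ∀ N ≥ N₀, lhom l N f ∈ projClosureIdeal I}
      add_mem' := by
        rintro a b ⟨N₁, h₁⟩ ⟨N₂, h₂⟩
        refine ⟨max N₁ N₂, fun N hN => ?_⟩
        rw [map_add]
        exact add_mem (h₁ N (le_trans (le_max_left _ _) hN)) (h₂ N (le_trans (le_max_right _ _) hN))
      zero_mem' := ⟨0, fun N _ => by rw [map_zero]; exact zero_mem _⟩
      smul_mem' := by
        rintro c a ⟨N₁, h₁⟩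
        refine ⟨N₁, fun N hN => ?_⟩
        rw [map_smul, smul_eq_C_mul]
        exact Ideal.mul_mem_left _ _ (h₁ N hN) }
  have hW : ∀ g : MvPolynomial (Fin (n + 1)) ℂ, (∀ α, monomial α 1 * g ∈ W) → ∀ p, p * g ∈ W := by
    intro g hg p
    exact rs_le (s := Set.univ) (LinearMap.mulRight ℂ g) W (fun α _ => hg α)
      (by rw [restrictSupport_univ]; trivial)
  have hJ : ∀ f ∈ projClosureIdeal I, f ∈ W := by
    intro f hf
    refine Submodule.span_induction (p := fun f _ => f ∈ projClosureIdeal I → f ∈ W)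
      ?_ ?_ ?_ ?_ hf hf
    · rintro F ⟨⟨d, hd⟩, hF⟩ hFJ
      exact ⟨0, fun N _ => by rw [lhom_homog l N hd]; exact Ideal.mul_mem_right _ _ hFJ⟩
    · intro _; exact zero_mem _
    · intro a b ha hb h1 h2 _
      exact add_mem (h1 ha) (h2 hb)
    · intro p a ha _ _
      rw [smul_eq_mul]
      have key : ∀ d, p * homogeneousComponent d a ∈ W := by
        intro d
        apply hW
        intro α
        refine ⟨0, fun N _ => ?_⟩
        rw [lhom_homog l N ((isHomogeneous_monomial (d := α) (1 : ℂ) rfl).mul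
          (homogeneousComponent_isHomogeneous d a))]
        exact Ideal.mul_mem_right _ _ (Ideal.mul_mem_left _ _ (proj_homog I ha d))
      rw [← sum_homogeneousComponent a, Finset.mul_sum]
      exact sum_mem fun d _ => key d
  have hl1 : ∀ p, p * (l - 1) ∈ W := by
    apply hW
    intro α
    refine ⟨α.degree + 1, fun N hN => ?_⟩
    have hm : (monomial α (1 : ℂ)).IsHomogeneous α.degree := isHomogeneous_monomial (1 : ℂ) rfl
    rw [mul_sub, mul_one, map_sub, lhom_homog l N (hm.mul hl), lhom_homog l N hm, mul_assoc,
      ← pow_succ', show N - (α.degree + 1) + 1 = N - α.degree by omega, sub_self]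
    exact zero_mem _
  obtain ⟨a, ha, b, hb, rfl⟩ := Submodule.mem_sup.1 hf
  obtain ⟨p, rfl⟩ := Ideal.mem_span_singleton'.1 hb
  exact W.add_mem (hJ a ha) (hl1 p)

lemma killHat {n : ℕ} {R : Type*} [CommRing R] [Algebra ℂ R]
    (ψ : MvPolynomial (Fin (n + 1)) ℂ →ₐ[ℂ] R) (I : Ideal (MvPolynomial (Fin n) ℂ))
    (w : Fin (n + 1) → ℝ) (l l₀ : MvPolynomial (Fin (n + 1)) ℂ) (hl : l.IsHomogeneous 1)
    (hL : Lead w 0 l l₀) (hl₀ : ψ l₀ = 1)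
    (hψ : initialIdeal w (projClosureIdeal I) ≤ RingHom.ker (ψ : _ →+* R)) :
    initialIdeal w (projClosureIdeal I ⊔ Ideal.span {l - 1}) ≤ RingHom.ker (ψ : _ →+* R) := by
  refine kills_initial _ _ _ fun f hf m g hfg _ => ?_
  obtain ⟨N, hN⟩ := lhom_mem I l hl hf
  have h1 := hN N le_rfl
  have h2 : Lead w (m + 0) (lhom l N f) (lhom l₀ N g) := by
    refine hfg.map 0 Set.univ (by simp) (by simp) _ _ fun α _ => ?_
    rw [lhom_monomial, lhom_monomial]
    exact (Lead.monomial w α).mul (hL.pow _)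
  have h3 := hψ (h2.mem h1)
  rw [RingHom.mem_ker] at h3
  change ψ _ = 0 at h3
  change ψ g = 0
  rw [← h3]
  have := rs_le (s := Set.univ) (f := g) (ψ.toLinearMap - ψ.toLinearMap ∘ₗ lhom l₀ N) ⊥ ?_
    (by simp)
  · simpa [sub_eq_zero] using this
  · intro α _
    simp [lhom_monomial, hl₀]

/-! ### Part 5: Laurent polynomials -/

/-- `polyToLaurent` as an algebra map. -/
def ptl {n : ℕ} : MvPolynomial (Fin n) ℂ →ₐ[ℂ] MvLaurent n ℂ :=
  { (polyToLaurent : MvPolynomial (Fin n) ℂ →+* MvLaurent n ℂ) with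
    commutes' := by
      intro r
      change polyToLaurent (monomial 0 r) = _
      change AddMonoidAlgebra.mapDomain _ (AddMonoidAlgebra.single _ _) = _
      rw [AddMonoidAlgebra.mapDomain_single, map_zero]
      rfl }

lemma ptl_coe {n : ℕ} : ((ptl : MvPolynomial (Fin n) ℂ →ₐ[ℂ] MvLaurent n ℂ) :
    MvPolynomial (Fin n) ℂ →+* MvLaurent n ℂ) = polyToLaurent := rfl

lemma ptl_X {n : ℕ} (i : Fin n) :
    ptl (X i) = AddMonoidAlgebra.single (Finsupp.single i (1 : ℤ)) (1 : ℂ) := by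
  change AddMonoidAlgebra.mapDomain _ (AddMonoidAlgebra.single _ _) = _
  rw [AddMonoidAlgebra.mapDomain_single]
  simp

/-- The images of the variables as units. -/
def tU {n : ℕ} (i : Fin n) : (MvLaurent n ℂ)ˣ where
  val := ptl (X i)
  inv := AddMonoidAlgebra.single (Finsupp.single i (-1 : ℤ)) (1 : ℂ)
  val_inv := by
    rw [ptl_X, AddMonoidAlgebra.single_mul_single, ← Finsupp.single_add]
    simp [AddMonoidAlgebra.one_def]
  inv_val := by
    rw [ptl_X, AddMonoidAlgebra.single_mul_single, ← Finsupp.single_add]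
    simp [AddMonoidAlgebra.one_def]

lemma lau_ext {n : ℕ} {R : Type*} [CommRing R] [Algebra ℂ R] (φ₁ φ₂ : MvLaurent n ℂ →ₐ[ℂ] R)
    (h : ∀ i, φ₁ (ptl (X i)) = φ₂ (ptl (X i))) : φ₁ = φ₂ := by
  have key : ∀ φ : MvLaurent n ℂ →ₐ[ℂ] R, ∀ α : Fin n →₀ ℤ,
      φ (AddMonoidAlgebra.single α 1) =
        ((∏ i, (Units.map (φ : MvLaurent n ℂ →* R) (tU i)) ^ (α i) : Rˣ) : R) := by
    intro φ α
    have e : (AddMonoidAlgebra.single α (1 : ℂ) : MvLaurent n ℂ) =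
        ((∏ i, (tU i) ^ (α i) : (MvLaurent n ℂ)ˣ) : MvLaurent n ℂ) := by
      have hz : ∀ (i : Fin n) (k : ℤ), (((tU i) ^ k : (MvLaurent n ℂ)ˣ) : MvLaurent n ℂ) =
          AddMonoidAlgebra.single (Finsupp.single i k) 1 := by
        have hnat : ∀ (i : Fin n) (k : ℕ), (((tU i) ^ k : (MvLaurent n ℂ)ˣ) : MvLaurent n ℂ) =
          AddMonoidAlgebra.single (Finsupp.single i (k : ℤ)) 1 := by
          intro i k
          rw [Units.val_pow_eq_pow_val]
          change (ptl (X i)) ^ k = _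
          rw [ptl_X, AddMonoidAlgebra.single_pow]
          simp
        have hnat' : ∀ (i : Fin n) (k : ℕ),
            ((((tU i)⁻¹) ^ k : (MvLaurent n ℂ)ˣ) : MvLaurent n ℂ) =
          AddMonoidAlgebra.single (Finsupp.single i (-k : ℤ)) 1 := by
          intro i k
          rw [Units.val_pow_eq_pow_val]
          change (AddMonoidAlgebra.single (Finsupp.single i (-1 : ℤ)) (1 : ℂ) : MvLaurent n ℂ) ^ k
            = _
          rw [AddMonoidAlgebra.single_pow]
          simp
        intro i k
        obtain ⟨k, rfl | rfl⟩ := k.eq_nat_or_neg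
        · rw [zpow_natCast, hnat]
        · rw [zpow_neg, zpow_natCast, ← inv_pow, hnat']
      rw [Units.coe_prod]
      simp only [hz]
      have hs : ∀ s : Finset (Fin n), (∏ i ∈ s, (AddMonoidAlgebra.single (Finsupp.single i (α i))
          (1 : ℂ) : MvLaurent n ℂ)) =
          AddMonoidAlgebra.single (∑ i ∈ s, Finsupp.single i (α i)) 1 := by
        intro s
        induction s using Finset.induction_on with
        | empty => simp [AddMonoidAlgebra.one_def]
        | insert a s ha ih =>
          rw [Finset.prod_insert ha, Finset.sum_insert ha, ih,
            AddMonoidAlgebra.single_mul_single, one_mul]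
      rw [hs, Finsupp.univ_sum_single]
    rw [e]
    have : ∀ u : (MvLaurent n ℂ)ˣ, φ (u : MvLaurent n ℂ) =
      (Units.map (φ : MvLaurent n ℂ →* R) u : R) := fun u => rfl
    rw [this, map_prod]
    simp only [map_zpow]
  have hu : ∀ i, Units.map (φ₁ : MvLaurent n ℂ →* R) (tU i) =
      Units.map (φ₂ : MvLaurent n ℂ →* R) (tU i) := fun i => Units.ext (h i)
  refine AddMonoidAlgebra.algHom_ext' (MonoidHom.ext fun α => ?_) (Subsingleton.elim _ _)
  change φ₁ (AddMonoidAlgebra.single α.toAdd 1) = φ₂ (AddMonoidAlgebra.single α.toAdd 1)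
  rw [key, key]
  simp only [hu]

/-- Universal property of the Laurent polynomial ring. -/
def lauLift {n : ℕ} {R : Type*} [CommRing R] [Algebra ℂ R] (u : Fin n → Rˣ) :
    MvLaurent n ℂ →ₐ[ℂ] R :=
  AddMonoidAlgebra.lift ℂ R (Fin n →₀ ℤ)
    { toFun := fun α => ((∏ i, (u i) ^ (α.toAdd i) : Rˣ) : R)
      map_one' := by simp
      map_mul' := by
        intro a b
        rw [← Units.val_mul, ← Finset.prod_mul_distrib]
        simp [zpow_add] }

lemma lauLift_X {n : ℕ} {R : Type*} [CommRing R] [Algebra ℂ R] (u : Fin n → Rˣ) (i : Fin n) :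
    lauLift u (ptl (X i)) = u i := by
  rw [ptl_X, lauLift, AddMonoidAlgebra.lift_single, one_smul]
  change ((∏ j, (u j) ^ ((Finsupp.single i (1 : ℤ)) j) : Rˣ) : R) = _
  congr 1
  rw [Finset.prod_eq_single i]
  · simp
  · intro j _ hj
    rw [Finsupp.single_eq_of_ne hj, zpow_zero]
  · simp

instance lau_ft {n : ℕ} : Algebra.FiniteType ℂ (MvLaurent n ℂ) := by
  have : AddGroup.FG (Fin n →₀ ℤ) := Module.Finite.iff_addGroup_fg.1 inferInstance
  have : AddMonoid.FG (Fin n →₀ ℤ) := AddGroup.fg_iff_addMonoid_fg.1 this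
  infer_instance

lemma exists_point {R : Type*} [CommRing R] [Algebra ℂ R] [Algebra.FiniteType ℂ R] (x : R)
    (hx : ¬ IsUnit x) : ∃ χ : R →ₐ[ℂ] ℂ, χ x = 0 := by
  obtain ⟨M, hM, hxM⟩ := exists_max_ideal_of_mem_nonunits hx
  let _ := Ideal.Quotient.field M
  have : Module.Finite ℂ (R ⧸ M) := finite_of_finite_type_of_isJacobsonRing ℂ (R ⧸ M)
  have hb : Function.Bijective (algebraMap ℂ (R ⧸ M)) :=
    IsAlgClosed.algebraMap_bijective_of_isIntegral
  let e : ℂ ≃ₐ[ℂ] (R ⧸ M) := AlgEquiv.ofBijective (Algebra.ofId ℂ (R ⧸ M)) hb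
  refine ⟨(e.symm : (R ⧸ M) →ₐ[ℂ] ℂ).comp (Ideal.Quotient.mkₐ ℂ M), ?_⟩
  have : Ideal.Quotient.mkₐ ℂ M x = 0 := Ideal.Quotient.eq_zero_iff_mem.2 hxM
  rw [AlgHom.comp_apply, this, map_zero]

/-! ### Part 6: the linear form -/

/-- A linear form. -/
def lform {n : ℕ} (v : Fin n → ℂ) : MvPolynomial (Fin n) ℂ := ∑ i, MvPolynomial.C (v i) * X i

lemma lform_homog {n : ℕ} (v : Fin n → ℂ) : (lform v).IsHomogeneous 1 := by
  refine IsHomogeneous.sum _ _ _ fun i _ => ?_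
  have := (isHomogeneous_C (Fin n) (v i)).mul (isHomogeneous_X ℂ i)
  rwa [zero_add] at this

/-- The part of `v` on which the weight vanishes. -/
def v0 {n : ℕ} (w : Fin n → ℤ) (v : Fin n → ℂ) : Fin n → ℂ := fun i => if w i = 0 then v i else 0

lemma lform_lead {n : ℕ} (w : Fin n → ℤ) (hw : ∀ i, w i ≤ 0) (v : Fin n → ℂ) :
    Lead (fun i => (w i : ℝ)) 0 (lform v) (lform (v0 w v)) := by
  have hwd : ∀ i, wdeg (fun i => (w i : ℝ)) (Finsupp.single i 1) = w i := by
    intro i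
    rw [wdeg, Finset.sum_eq_single i]
    · simp
    · intro j _ hj; simp [Finsupp.single_eq_of_ne hj]
    · simp
  constructor
  · refine sum_mem fun i _ => ?_
    rw [C_mul_X_eq_monomial, monomial_mem_restrictSupport]
    by_cases h : w i = 0
    · left
      simp [hwd, h]
    · right; simp [v0, h]
  · rw [lform, lform, ← Finset.sum_sub_distrib]
    refine sum_mem fun i _ => ?_
    rw [C_mul_X_eq_monomial, C_mul_X_eq_monomial, ← map_sub, monomial_mem_restrictSupport]
    by_cases h : w i = 0
    · right; simp [v0, h]
    · left
      have := lt_of_le_of_ne (hw i) h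
      change wdeg _ _ < 0
      rw [hwd]
      exact_mod_cast this

lemma patch_unit {n : ℕ} {R : Type*} [CommRing R] [Algebra ℂ R] [Algebra.FiniteType ℂ R]
    (I : Ideal (MvPolynomial (Fin n) ℂ)) (v : Fin (n + 1) → ℂ)
    (hpatch : PatchCond (projClosureIdeal I) v)
    (w : Fin (n + 1) → ℤ) (hw0 : ∀ i, w i ≤ 0) (hwj : ∃ j, w j = 0) (hwk : ∃ k, w k ≠ 0)
    (θ : MvPolynomial (Fin n) ℂ →ₐ[ℂ] R) (hu : ∀ i, IsUnit (θ (X i)))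
    (hθ : initialIdeal (fun i : Fin n => ((w i.succ : ℝ) - (w 0 : ℝ))) I ≤
      RingHom.ker (θ : _ →+* R)) :
    IsUnit (θ (dehom (lform (v0 w v)))) := by
  by_contra hx
  obtain ⟨χ, hχ⟩ := exists_point _ hx
  let θ' : MvPolynomial (Fin n) ℂ →ₐ[ℂ] ℂ := χ.comp θ
  let ψ : MvPolynomial (Fin (n + 1)) ℂ →ₐ[ℂ] ℂ := θ'.comp dehom
  have hθ' : initialIdeal (fun i : Fin n => ((w i.succ : ℝ) - (w 0 : ℝ))) I ≤
      RingHom.ker (θ' : _ →+* ℂ) := by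
    intro f hf
    have := hθ hf
    rw [RingHom.mem_ker] at this ⊢
    change θ f = 0 at this
    change χ (θ f) = 0
    rw [this, map_zero]
  have hψ := killJ ψ θ' 1 (fun i => by rw [one_mul]; rfl) I (fun i => (w i : ℝ)) hθ'
  let a : Fin (n + 1) → ℂ := fun i => if w i = 0 then ψ (X i) else 0
  have hne : ∀ i, ψ (X i) ≠ 0 := by
    intro i
    change χ (θ (dehom (X i))) ≠ 0
    refine Fin.cases ?_ (fun i => ?_) i
    · simp [dehom]
    · have : dehom (X i.succ : MvPolynomial (Fin (n + 1)) ℂ) = X i := by simp [dehom]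
      rw [this]
      exact ((hu i).map χ).ne_zero
  obtain ⟨j, hj⟩ := hwj
  obtain ⟨k, hk⟩ := hwk
  refine hpatch a ?_ ?_ ⟨k, by simp [a, hk]⟩ ?_
  · intro h
    have := congrFun h j
    simp only [a, hj, if_true, Pi.zero_apply] at this
    exact hne j this
  · intro F hF
    have hterm : ∀ (α : Fin (n + 1) →₀ ℕ) (i), (w i : ℝ) * α i ≤ 0 := fun α i =>
      mul_nonpos_of_nonpos_of_nonneg (by exact_mod_cast hw0 i) (Nat.cast_nonneg _)
    obtain ⟨G, hG⟩ := exists_lead_of_le (fun i => (w i : ℝ)) 0 F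
      (fun α => Finset.sum_nonpos fun i _ => hterm α i)
    have h1 := hψ (hG.mem hF)
    rw [RingHom.mem_ker] at h1
    change ψ G = 0 at h1
    have ev : ∀ (φ : MvPolynomial (Fin (n + 1)) ℂ →ₐ[ℂ] ℂ) (α : Fin (n + 1) →₀ ℕ),
        φ (monomial α 1) = ∏ i, φ (X i) ^ α i := by
      intro φ α
      rw [monomial_eq, map_one, one_mul, Finsupp.prod_fintype _ _ (by simp), map_prod]
      simp
    have h2 : (aeval a).toLinearMap (F - G) ∈ (⊥ : Submodule ℂ ℂ) := by
      refine rs_le _ _ (fun α hα => ?_) hG.2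
      have hα' : wdeg (fun i => (w i : ℝ)) α < 0 := hα
      rw [wdeg] at hα'
      obtain ⟨i, -, hi⟩ := Finset.exists_lt_of_sum_lt (s := Finset.univ) (g := fun _ => (0 : ℝ))
        (f := fun i => (w i : ℝ) * α i) (by simpa using hα')
      have hwi : w i ≠ 0 := by
        rintro h0
        simp [h0] at hi
      have hαi : α i ≠ 0 := by
        rintro h0
        simp [h0] at hi
      rw [Submodule.mem_bot, AlgHom.toLinearMap_apply, ev]
      refine Finset.prod_eq_zero (Finset.mem_univ i) ?_
      simp [a, hwi, hαi]
    have h3 : ((aeval a : MvPolynomial (Fin (n + 1)) ℂ →ₐ[ℂ] ℂ).toLinearMap - ψ.toLinearMap) G ∈ (⊥ : Submodule ℂ ℂ) := by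
      refine rs_le _ _ (fun α hα => ?_) hG.1
      have hα' : wdeg (fun i => (w i : ℝ)) α = 0 := hα
      rw [wdeg, Finset.sum_eq_zero_iff_of_nonpos (fun i _ => hterm α i)] at hα'
      rw [Submodule.mem_bot, LinearMap.sub_apply, AlgHom.toLinearMap_apply,
        AlgHom.toLinearMap_apply, ev, ev, sub_eq_zero]
      refine Finset.prod_congr rfl fun i _ => ?_
      rcases mul_eq_zero.1 (hα' i (Finset.mem_univ i)) with h | h
      · have : w i = 0 := by exact_mod_cast h
        simp [a, this]
      · have : α i = 0 := by exact_mod_cast h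
        simp [this]
    rw [Submodule.mem_bot, map_sub, sub_eq_zero] at h2
    rw [Submodule.mem_bot, LinearMap.sub_apply, sub_eq_zero] at h3
    rw [← coe_aeval_eq_eval]
    exact h2.trans (h3.trans h1)
  · change ψ (lform (v0 w v)) = 0 at hχ
    rw [← hχ, lform, map_sum]
    refine Finset.sum_congr rfl fun i _ => ?_
    rw [map_mul]
    by_cases h : w i = 0
    · simp [a, v0, h, algHom_C]
    · simp [a, v0, h]

/-- The tropical multiplicity of `In_w(Î)` in `ℂ[x₀^±,…,xₙ^±]` equals that of `In_u(I)` in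
`ℂ[x₁^±,…,xₙ^±]`, where `u = (w₁ − w₀, …, wₙ − w₀)`. -/
theorem tropMult_patch {n : ℕ}
    (I : Ideal (MvPolynomial (Fin n) ℂ)) (hI : I.IsPrime)
    (hdim : ringKrullDim (MvPolynomial (Fin n) ℂ ⧸ I) = 1)
    (J : Ideal (MvPolynomial (Fin (n + 1)) ℂ)) (hJ : J = projClosureIdeal I)
    (hXJ : ∀ i, X i ∉ J)
    (v : Fin (n + 1) → ℂ) (hv : ∀ i, v i ≠ 0) (hpatch : PatchCond J v)
    (Ihat : Ideal (MvPolynomial (Fin (n + 1)) ℂ))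
    (hIhat : Ihat = J ⊔ Ideal.span {(∑ i, MvPolynomial.C (v i) * X i) - 1})
    (w : Fin (n + 1) → ℤ) (hw0 : ∀ i, w i ≤ 0) (hwj : ∃ j, w j = 0)
    (hwk : ∃ k, w k ≠ 0)
    (hproper : Ideal.map polyToLaurent (initialIdeal (fun i => (w i : ℝ)) Ihat) ≠ ⊤) :
    tropMult (initialIdeal (fun i => (w i : ℝ)) Ihat) =
      tropMult (initialIdeal (fun i : Fin n => ((w i.succ : ℝ) - (w 0 : ℝ))) I) := by
  subst hJ hIhat
  set u : Fin n → ℝ := fun i : Fin n => ((w i.succ : ℝ) - (w 0 : ℝ)) with hu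
  set wr : Fin (n + 1) → ℝ := fun i => (w i : ℝ) with hwr
  set Ih := projClosureIdeal I ⊔ Ideal.span {(∑ i, MvPolynomial.C (v i) * X i) - 1} with hIh
  set A : Ideal (MvLaurent n ℂ) := Ideal.map polyToLaurent (initialIdeal u I) with hA
  set A' : Ideal (MvLaurent (n + 1) ℂ) := Ideal.map polyToLaurent (initialIdeal wr Ih) with hA'
  let π : MvLaurent n ℂ →ₐ[ℂ] (MvLaurent n ℂ ⧸ A) := Ideal.Quotient.mkₐ ℂ A
  let π' : MvLaurent (n + 1) ℂ →ₐ[ℂ] (MvLaurent (n + 1) ℂ ⧸ A') := Ideal.Quotient.mkₐ ℂ A'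
  let θ : MvPolynomial (Fin n) ℂ →ₐ[ℂ] (MvLaurent n ℂ ⧸ A) := π.comp ptl
  have hθ : initialIdeal u I ≤ RingHom.ker (θ : _ →+* (MvLaurent n ℂ ⧸ A)) := by
    intro f hf
    exact Ideal.Quotient.eq_zero_iff_mem.2 (Ideal.mem_map_of_mem polyToLaurent hf)
  let yU : Fin n → (MvLaurent n ℂ ⧸ A)ˣ := fun i => Units.map (π : _ →* _) (tU i)
  have hyU : ∀ i, (yU i : MvLaurent n ℂ ⧸ A) = θ (X i) := fun i => rfl
  have : Algebra.FiniteType ℂ (MvLaurent n ℂ ⧸ A) :=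
    Algebra.FiniteType.of_surjective π (Ideal.Quotient.mkₐ_surjective ℂ A)
  have hunit := patch_unit I v hpatch w hw0 hwj hwk θ (fun i => ⟨yU i, hyU i⟩) hθ
  obtain ⟨lam, hlam⟩ := hunit
  let Ψ : MvLaurent (n + 1) ℂ →ₐ[ℂ] (MvLaurent n ℂ ⧸ A) :=
    lauLift (fun i => lam⁻¹ * (Fin.cons 1 yU : Fin (n + 1) → (MvLaurent n ℂ ⧸ A)ˣ) i)
  let ψ : MvPolynomial (Fin (n + 1)) ℂ →ₐ[ℂ] (MvLaurent n ℂ ⧸ A) := Ψ.comp ptl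
  have hψX : ∀ i, ψ (X i) = ((lam⁻¹ : (MvLaurent n ℂ ⧸ A)ˣ) : MvLaurent n ℂ ⧸ A) *
      θ (dehom (X i)) := by
    intro i
    change Ψ (ptl (X i)) = _
    rw [lauLift_X, Units.val_mul]
    congr 1
    refine Fin.cases ?_ (fun i => ?_) i
    · simp [dehom]
    · simp [dehom, hyU]
  have hψJ := killJ ψ θ _ hψX I wr hθ
  have hψl : ψ (lform (v0 w v)) = 1 := by
    rw [hom_formula ψ θ _ hψX (lform_homog _), ← hlam, pow_one, Units.inv_mul]
  have hlead := lform_lead w hw0 v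
  have hψhat : initialIdeal wr Ih ≤ RingHom.ker (ψ : _ →+* (MvLaurent n ℂ ⧸ A)) :=
    killHat ψ I wr (lform v) (lform (v0 w v)) (lform_homog v) hlead hψl hψJ
  -- the inverse map
  let Φ : MvLaurent n ℂ →ₐ[ℂ] MvLaurent (n + 1) ℂ :=
    lauLift (fun i => (tU 0)⁻¹ * tU i.succ)
  have hsurj : Function.Surjective Ψ := by
    have hc : Ψ.comp Φ = π := by
      apply lau_ext
      intro i
      rw [AlgHom.comp_apply, lauLift_X]
      have h1 : ∀ j, Units.map (Ψ : MvLaurent (n + 1) ℂ →* (MvLaurent n ℂ ⧸ A)) (tU j) =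
          lam⁻¹ * (Fin.cons 1 yU : Fin (n + 1) → (MvLaurent n ℂ ⧸ A)ˣ) j :=
        fun j => Units.ext (lauLift_X _ j)
      change ((Units.map (Ψ : MvLaurent (n + 1) ℂ →* (MvLaurent n ℂ ⧸ A))
        ((tU 0)⁻¹ * tU i.succ) : (MvLaurent n ℂ ⧸ A)ˣ) : MvLaurent n ℂ ⧸ A) = (yU i)
      rw [map_mul, map_inv, h1, h1]
      simp
    intro x
    obtain ⟨z, rfl⟩ := Ideal.Quotient.mkₐ_surjective ℂ A x
    exact ⟨Φ z, DFunLike.congr_fun hc z⟩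
  let ψ' : MvPolynomial (Fin (n + 1)) ℂ →ₐ[ℂ] (MvLaurent (n + 1) ℂ ⧸ A') := π'.comp ptl
  let κ : MvLaurent n ℂ →ₐ[ℂ] (MvLaurent (n + 1) ℂ ⧸ A') := π'.comp Φ
  let θ' : MvPolynomial (Fin n) ℂ →ₐ[ℂ] (MvLaurent (n + 1) ℂ ⧸ A') := κ.comp ptl
  have hψ'hat : initialIdeal wr Ih ≤ RingHom.ker (ψ' : _ →+* (MvLaurent (n + 1) ℂ ⧸ A')) := by
    intro f hf
    exact Ideal.Quotient.eq_zero_iff_mem.2 (Ideal.mem_map_of_mem polyToLaurent hf)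
  have hψ'X : ∀ i, ψ' (X i) = ψ' (X 0) * θ' (dehom (X i)) := by
    intro i
    refine Fin.cases ?_ (fun i => ?_) i
    · simp [dehom]
    · have h1 : dehom (X i.succ : MvPolynomial (Fin (n + 1)) ℂ) = X i := by simp [dehom]
      rw [h1]
      change π' (ptl (X i.succ)) = π' (ptl (X 0)) * π' (Φ (ptl (X i)))
      rw [← map_mul, lauLift_X]
      congr 1
      change ((tU i.succ : (MvLaurent (n + 1) ℂ)ˣ) : MvLaurent (n + 1) ℂ) =
        ((tU 0 : (MvLaurent (n + 1) ℂ)ˣ) : MvLaurent (n + 1) ℂ) * _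
      rw [← Units.val_mul, mul_inv_cancel_left]
  have hmono : initialIdeal wr (projClosureIdeal I) ≤ initialIdeal wr Ih := by
    refine Ideal.span_mono ?_
    rintro _ ⟨f, hf, rfl⟩
    exact ⟨f, Ideal.mem_sup_left hf, rfl⟩
  have hx0 : IsUnit (ψ' (X 0)) := (tU (0 : Fin (n + 1))).isUnit.map π'
  have hθ'I : initialIdeal u I ≤ RingHom.ker (θ' : _ →+* (MvLaurent (n + 1) ℂ ⧸ A')) :=
    killI ψ' θ' _ hx0 hψ'X I wr (hmono.trans hψ'hat)
  have hκA : ∀ a ∈ A, κ a = 0 := by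
    have : A ≤ RingHom.ker (κ : _ →+* (MvLaurent (n + 1) ℂ ⧸ A')) :=
      Ideal.map_le_iff_le_comap.2 fun f hf => hθ'I hf
    exact fun a ha => this ha
  let κb : (MvLaurent n ℂ ⧸ A) →ₐ[ℂ] (MvLaurent (n + 1) ℂ ⧸ A') := Ideal.Quotient.liftₐ A κ hκA
  have hκb : ∀ z, κb (π z) = κ z := fun z => rfl
  have hψ'l : ψ' (lform (v0 w v)) = 1 := by
    have h1 : lform (v0 w v) - 1 ∈ initialIdeal wr Ih :=
      (hlead.sub (Lead.one wr)).mem (Ideal.mem_sup_right (Ideal.subset_span rfl))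
    have h2 := hψ'hat h1
    rw [RingHom.mem_ker] at h2
    change ψ' _ = 0 at h2
    rwa [map_sub, map_one, sub_eq_zero] at h2
  have hκlam : ψ' (X 0) * κb (lam : MvLaurent n ℂ ⧸ A) = 1 := by
    rw [hlam]
    rw [hom_formula ψ' θ' _ hψ'X (lform_homog _), pow_one] at hψ'l
    exact hψ'l
  have hκinv : κb ((lam⁻¹ : (MvLaurent n ℂ ⧸ A)ˣ) : MvLaurent n ℂ ⧸ A) = ψ' (X 0) := by
    have h1 : κb (lam : MvLaurent n ℂ ⧸ A) *
        κb ((lam⁻¹ : (MvLaurent n ℂ ⧸ A)ˣ) : MvLaurent n ℂ ⧸ A) = 1 := by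
      rw [← map_mul, Units.mul_inv, map_one]
    calc _ = (ψ' (X 0) * κb (lam : MvLaurent n ℂ ⧸ A)) *
          κb ((lam⁻¹ : (MvLaurent n ℂ ⧸ A)ˣ) : MvLaurent n ℂ ⧸ A) := by rw [hκlam, one_mul]
      _ = _ := by rw [mul_assoc, h1, mul_one]
  have hcomp : κb.comp Ψ = π' := by
    apply lau_ext
    intro i
    change κb (ψ (X i)) = ψ' (X i)
    rw [hψX, map_mul, hκinv, hψ'X i]
    rfl
  have hker : RingHom.ker (Ψ : MvLaurent (n + 1) ℂ →+* (MvLaurent n ℂ ⧸ A)) = A' := by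
    apply le_antisymm
    · intro z hz
      have h1 : Ψ z = 0 := hz
      have h2 : π' z = 0 := by
        rw [← hcomp, AlgHom.comp_apply, h1, map_zero]
      exact Ideal.Quotient.eq_zero_iff_mem.1 h2
    · exact Ideal.map_le_iff_le_comap.2 fun f hf => hψhat hf
  have r1 := mult_quot (Ψ : MvLaurent (n + 1) ℂ →+* (MvLaurent n ℂ ⧸ A)) hsurj
  have r2 := mult_quot (Ideal.Quotient.mk A) Ideal.Quotient.mk_surjective
  rw [hker] at r1
  rw [Ideal.mk_ker] at r2
  unfold tropMult
  exact r1.trans r2.symm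

end
end
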